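/- arXiv:2412.20566 — 7 statements merged into one kernel-verified Lean document; each statement's English description precedes it below -/
import Mathlib

section
/- Let B be a bivector in ℝ_{p,q,r} and v a vector. Setting w := B × v (= B · v), one has for every j ≥ 1 that W_j · v = W_{j−1} ∧ w, i.e. ⟨W_j v⟩_{2j−1} = ⟨W_{j−1} w⟩_{2j−1}, where W_0 := 1. -/
/-! Common setup: the real geometric algebra `ℝ_{p,q,r}`, grade projections `⟨·⟩_ℓ`,
the commutator product `×`, the wedge powers `W_j`, the outer exponential and outer
trigonometric functions, the characteristic polynomial data `M_μ`, and the
complexification `ℂ ⊗ ℝ_{p,q,r}`. -/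

noncomputable section

open CliffordAlgebra TensorProduct

/-- The diagonal quadratic form of signature `(p,q,r)` on `ℝⁿ`, `n = p+q+r`:
`p` basis vectors of square `+1`, `q` of square `-1`, `r` of square `0`.
`ℝ_{p,q,r} := CliffordAlgebra (sigQ p q r)`. -/
def sigQ (p q r : ℕ) : QuadraticForm ℝ (Fin (p + q + r) → ℝ) :=
  QuadraticMap.weightedSumSquares ℝ
    (fun i : Fin (p + q + r) => if (i : ℕ) < p then (1 : ℝ) else if (i : ℕ) < p + q then -1 else 0)

variable {K : Type*} [Field K] [CharZero K] {M : Type*} [AddCommGroup M] [Module K M]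

/-- The grade-`ℓ` component `⟨x⟩_ℓ` of an element of a Clifford algebra, obtained by
transporting the grading of the exterior algebra along `CliffordAlgebra.equivExterior`. -/
def gradeProj (Q : QuadraticForm K M) (ℓ : ℕ) (x : CliffordAlgebra Q) : CliffordAlgebra Q :=
  letI : Invertible (2 : K) := invertibleOfNonzero two_ne_zero
  (equivExterior Q).symm
    (DirectSum.decompose (fun n : ℕ => ⋀[K]^n M) (equivExterior Q x) ℓ : ExteriorAlgebra K M)

/-- `x` is homogeneous of grade `ℓ`; in particular `IsGrade Q 2 B` says `B` is a bivector. -/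
def IsGrade (Q : QuadraticForm K M) (ℓ : ℕ) (x : CliffordAlgebra Q) : Prop :=
  gradeProj Q ℓ x = x

/-- The commutator product `x × y := (xy - yx)/2`. -/
def cprod {Q : QuadraticForm K M} (x y : CliffordAlgebra Q) : CliffordAlgebra Q :=
  (2 : K)⁻¹ • (x * y - y * x)

/-- `W_j := (1/j!) ⟨B^j⟩_{2j}`, the normalized `j`-fold wedge power of `B`. -/
def Wj (Q : QuadraticForm K M) (B : CliffordAlgebra Q) (j : ℕ) : CliffordAlgebra Q :=
  ((j.factorial : K)⁻¹) • gradeProj Q (2 * j) (B ^ j)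

/-- `B` has effective dimension `2k`: `k` is the largest integer with `W_k ≠ 0`. -/
def HasEffDim (Q : QuadraticForm K M) (B : CliffordAlgebra Q) (k : ℕ) : Prop :=
  Wj Q B k ≠ 0 ∧ ∀ j, k < j → Wj Q B j = 0

/-- The outer exponential `Λ^B = Σ_{j≥0} W_j`; `n` is any bound beyond which all the `W_j`
vanish (e.g. the dimension of the underlying space), so the sum is complete. -/
def outerExp (Q : QuadraticForm K M) (n : ℕ) (B : CliffordAlgebra Q) : CliffordAlgebra Q :=
  ∑ j ∈ Finset.range (n + 1), Wj Q B j

/-- The outer cosine `co∧(B) := (Λ^B + Λ^{-B})/2`. -/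
def coW (Q : QuadraticForm K M) (n : ℕ) (B : CliffordAlgebra Q) : CliffordAlgebra Q :=
  (2 : K)⁻¹ • (outerExp Q n B + outerExp Q n (-B))

/-- The outer sine `si∧(B) := (Λ^B - Λ^{-B})/2`. -/
def siW (Q : QuadraticForm K M) (n : ℕ) (B : CliffordAlgebra Q) : CliffordAlgebra Q :=
  (2 : K)⁻¹ • (outerExp Q n B - outerExp Q n (-B))

/-- `M_μ := Σ_{j=0}^k (-μ)^{k-j} W_j`; the characteristic polynomial of `B` is
`P_{2k}(μ) = M_μ * reverse M_μ`. -/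
def Mpoly (Q : QuadraticForm K M) (B : CliffordAlgebra Q) (k : ℕ) (μ : K) : CliffordAlgebra Q :=
  ∑ j ∈ Finset.range (k + 1), (-μ) ^ (k - j) • Wj Q B j

/-- The wedge (outer) product, `X ∧ Y := ⟨XY⟩_{i+j}` on homogeneous elements of grades `i`, `j`,
extended bilinearly; `n` bounds the occurring grades. -/
def wedgeProd (Q : QuadraticForm K M) (n : ℕ) (x y : CliffordAlgebra Q) : CliffordAlgebra Q :=
  ∑ i ∈ Finset.range (n + 1), ∑ j ∈ Finset.range (n + 1),
    gradeProj Q (i + j) (gradeProj Q i x * gradeProj Q j y)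

/-- The dot product of two vectors, `u · v = ⟨uv⟩₀ = polar(Q)(u,v)/2`, as a scalar. -/
def vdot (Q : QuadraticForm K M) (u v : M) : K := (2 : K)⁻¹ * QuadraticMap.polar Q u v

/-- The complexified quadratic form of signature `(p,q,r)`. -/
def sigQc (p q r : ℕ) : QuadraticForm ℂ (ℂ ⊗[ℝ] (Fin (p + q + r) → ℝ)) :=
  letI : Invertible (2 : ℝ) := invertibleOfNonzero two_ne_zero
  (sigQ p q r).baseChange ℂ

/-- The canonical embedding of `ℝ_{p,q,r}` into its complexification `ℂ ⊗ ℝ_{p,q,r}`. -/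
def toC (p q r : ℕ) (x : CliffordAlgebra (sigQ p q r)) : CliffordAlgebra (sigQc p q r) :=
  letI : Invertible (2 : ℝ) := invertibleOfNonzero two_ne_zero
  ofBaseChange ℂ (sigQ p q r) ((1 : ℂ) ⊗ₜ x)

/-- `v` is an eigenvector of the bivector `B` with eigenvalue `μ`: `v ≠ 0` and `B × v = μ v`. -/
def IsEigen (Q : QuadraticForm K M) (B : CliffordAlgebra Q) (μ : K) (v : M) : Prop :=
  v ≠ 0 ∧ cprod B (ι Q v) = μ • ι Q v

end

section WjAux

set_option linter.unusedSectionVars false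

open CliffordAlgebra

variable {K : Type*} [Field K] [CharZero K] {M : Type*} [AddCommGroup M] [Module K M]

/-- Projection on grade `i` in the exterior algebra. -/
noncomputable def extP (K : Type*) [Field K] (M : Type*) [AddCommGroup M] [Module K M] (i : ℕ) :
    CliffordAlgebra (0 : QuadraticForm K M) →ₗ[K] CliffordAlgebra (0 : QuadraticForm K M) :=
  GradedAlgebra.proj (fun n : ℕ => ⋀[K]^n M) i

theorem extP_same {n : ℕ} {x : CliffordAlgebra (0 : QuadraticForm K M)} (h : x ∈ ⋀[K]^n M) :
    extP K M n x = x :=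
  DirectSum.decompose_of_mem_same (fun n : ℕ => ⋀[K]^n M) h

theorem extP_ne {n m : ℕ} {x : CliffordAlgebra (0 : QuadraticForm K M)} (h : x ∈ ⋀[K]^n M)
    (hnm : n ≠ m) : extP K M m x = 0 :=
  DirectSum.decompose_of_mem_ne (fun n : ℕ => ⋀[K]^n M) h hnm

theorem extP_mem (n : ℕ) (x : CliffordAlgebra (0 : QuadraticForm K M)) :
    extP K M n x ∈ ⋀[K]^n M :=
  (DirectSum.decompose (fun n : ℕ => ⋀[K]^n M) x n).2

theorem ext_ι_mem (u : M) : ι (0 : QuadraticForm K M) u ∈ ⋀[K]^1 M := by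
  rw [ExteriorAlgebra.exteriorPower, pow_one]; exact ⟨u, rfl⟩

theorem ext_mul_mem {n m : ℕ} {x y : CliffordAlgebra (0 : QuadraticForm K M)}
    (hx : x ∈ ⋀[K]^n M) (hy : y ∈ ⋀[K]^m M) : x * y ∈ ⋀[K]^(n + m) M :=
  SetLike.mul_mem_graded (A := fun n : ℕ => ⋀[K]^n M) hx hy

theorem extP_ι_mul (i : ℕ) (u : M) (y : CliffordAlgebra (0 : QuadraticForm K M)) :
    extP K M (i + 1) (ι 0 u * y) = ι 0 u * extP K M i y := by
  have h := DirectSum.coe_decompose_mul_add_of_left_mem (fun n : ℕ => ⋀[K]^n M) (i := 1) (j := i)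
    (b := y) (ext_ι_mem (K := K) u)
  rw [add_comm] at h
  exact h

theorem contract_mem (d : Module.Dual K M) {n : ℕ} {x : CliffordAlgebra (0 : QuadraticForm K M)}
    (h : x ∈ ⋀[K]^n M) :
    (∀ m, n = m + 1 → contractLeft d x ∈ ⋀[K]^m M) ∧ (n = 0 → contractLeft d x = 0) := by
  induction h using Submodule.pow_induction_on_left' with
  | algebraMap r => exact ⟨fun m hm => by omega, fun _ => contractLeft_algebraMap _ _ _⟩
  | add x y i hx hy ihx ihy =>
    refine ⟨fun m hm => ?_, fun h0 => ?_⟩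
    · rw [map_add]; exact add_mem (ihx.1 m hm) (ihy.1 m hm)
    · rw [map_add, ihx.2 h0, ihy.2 h0, add_zero]
  | mem_mul u hu i x hx ih =>
    obtain ⟨u, rfl⟩ := hu
    refine ⟨fun m hm => ?_, fun h0 => by omega⟩
    have hm' : i = m := by omega
    subst hm'
    have e : contractLeft d ((ExteriorAlgebra.ι K u : ExteriorAlgebra K M) * x)
      = d u • x - ι 0 u * contractLeft d x := contractLeft_ι_mul d u x
    rw [e]
    refine sub_mem (Submodule.smul_mem _ _ hx) ?_
    rcases i with _ | i
    · rw [ih.2 rfl, mul_zero]; exact zero_mem _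
    · rw [add_comm]; exact ext_mul_mem (ext_ι_mem u) (ih.1 i rfl)

theorem extP_contract (d : Module.Dual K M) (i : ℕ) (y : CliffordAlgebra (0 : QuadraticForm K M)) :
    extP K M i (contractLeft d y) = contractLeft d (extP K M (i + 1) y) := by
  induction y using DirectSum.Decomposition.inductionOn (fun n : ℕ => ⋀[K]^n M) with
  | zero => simp
  | add x y hx hy => simp only [map_add, hx, hy]
  | @homogeneous n x =>
    obtain ⟨x, hx⟩ := x
    change extP K M i (contractLeft d x) = contractLeft d (extP K M (i + 1) x)
    rcases n with _ | n
    · rw [(contract_mem d hx).2 rfl, extP_ne hx (by omega), map_zero, map_zero]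
    · by_cases h : n = i
      · subst h
        rw [extP_same hx, extP_same ((contract_mem d hx).1 n rfl)]
      · rw [extP_ne hx (by omega), extP_ne ((contract_mem d hx).1 n rfl) h, map_zero]

theorem contract_involute (d : Module.Dual K M) (y : CliffordAlgebra (0 : QuadraticForm K M)) :
    contractLeft d (involute y) = - involute (contractLeft d y) := by
  induction y using CliffordAlgebra.left_induction with
  | algebraMap r => simp
  | add x y hx hy => simp only [map_add, hx, hy]; abel
  | ι_mul x m hx =>
    simp only [map_mul, involute_ι, neg_mul, map_neg, contractLeft_ι_mul, hx, map_sub, map_smul,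
      mul_neg]

theorem bivector_induction {C : ∀ a : CliffordAlgebra (0 : QuadraticForm K M), a ∈ ⋀[K]^2 M → Prop}
    (hadd : ∀ x y hx hy, C x hx → C y hy → C (x + y) (add_mem hx hy))
    (hmul : ∀ u w : M, C (ι 0 u * ι 0 w) (ext_mul_mem (ext_ι_mem u) (ext_ι_mem w)))
    {a : CliffordAlgebra (0 : QuadraticForm K M)} (ha : a ∈ ⋀[K]^2 M) : C a ha := by
  suffices h : ∃ h : a ∈ ⋀[K]^2 M, C a h from h.2
  have ha' := ha
  rw [ExteriorAlgebra.exteriorPower, pow_two] at ha'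
  refine Submodule.mul_induction_on (C := fun a => ∃ h : a ∈ ⋀[K]^2 M, C a h) ha' ?_ ?_
  · rintro _ ⟨u, rfl⟩ _ ⟨w, rfl⟩
    exact ⟨_, hmul u w⟩
  · rintro x y ⟨hx, cx⟩ ⟨hy, cy⟩
    exact ⟨_, hadd x y hx hy cx cy⟩

theorem ext_anticomm (u w : M) :
    ι (0 : QuadraticForm K M) u * ι 0 w = - (ι 0 w * ι 0 u) := by
  have h := ι_mul_ι_add_swap (Q := (0 : QuadraticForm K M)) u w
  rw [eq_neg_iff_add_eq_zero, h]
  simp [QuadraticMap.polar]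

theorem bivector_comm {a : CliffordAlgebra (0 : QuadraticForm K M)} (ha : a ∈ ⋀[K]^2 M) (m : M) :
    Commute a (ι 0 m) := by
  induction ha using bivector_induction with
  | hadd x y _ _ hx hy => exact hx.add_left hy
  | hmul u w =>
    change ι 0 u * ι 0 w * ι 0 m = ι 0 m * (ι 0 u * ι 0 w)
    rw [mul_assoc, ext_anticomm w m, mul_neg, ← mul_assoc, ext_anticomm u m, neg_mul, neg_neg,
      mul_assoc]

theorem bivector_involute {a : CliffordAlgebra (0 : QuadraticForm K M)} (ha : a ∈ ⋀[K]^2 M) :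
    involute a = a := by
  induction ha using bivector_induction with
  | hadd x y _ _ hx hy => rw [map_add, hx, hy]
  | hmul u w => simp

theorem bivector_leibniz (d : Module.Dual K M) {a : CliffordAlgebra (0 : QuadraticForm K M)}
    (ha : a ∈ ⋀[K]^2 M) (z : CliffordAlgebra (0 : QuadraticForm K M)) :
    contractLeft d (a * z) = contractLeft d a * z + a * contractLeft d z := by
  induction ha using bivector_induction with
  | hadd x y _ _ hx hy => simp only [add_mul, map_add, hx, hy]; abel
  | hmul u w =>
    rw [mul_assoc, contractLeft_ι_mul, contractLeft_ι_mul, contractLeft_ι_mul, contractLeft_ι,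
      ← Algebra.commutes, ← Algebra.smul_def]
    simp only [mul_sub, sub_mul, smul_mul_assoc, mul_smul_comm, mul_assoc]
    abel

theorem contract_bivector (d : Module.Dual K M) {a : CliffordAlgebra (0 : QuadraticForm K M)}
    (ha : a ∈ ⋀[K]^2 M) : ∃ w : M, contractLeft d a = ι 0 w := by
  have h := (contract_mem d ha).1 1 rfl
  rw [ExteriorAlgebra.exteriorPower, pow_one] at h
  obtain ⟨w, hw⟩ := h
  exact ⟨w, hw.symm⟩

theorem contract_pow (d : Module.Dual K M) {a : CliffordAlgebra (0 : QuadraticForm K M)}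
    (ha : a ∈ ⋀[K]^2 M) (k : ℕ) :
    contractLeft d (a ^ (k + 1)) = ((k : K) + 1) • (a ^ k * contractLeft d a) := by
  obtain ⟨w, hw⟩ := contract_bivector d ha
  induction k with
  | zero => simp
  | succ k ih =>
    rw [pow_succ', bivector_leibniz d ha, ih, hw,
      ← ((bivector_comm ha w).pow_left (k + 1)).eq, mul_smul_comm, ← mul_assoc, ← pow_succ']
    rw [Nat.cast_succ, add_smul ((k : K) + 1) (1 : K), one_smul, add_comm]

theorem pow_mem_ext {a : CliffordAlgebra (0 : QuadraticForm K M)}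
    (ha : a ∈ ⋀[K]^2 M) (k : ℕ) : a ^ k ∈ ⋀[K]^(2 * k) M := by
  have := SetLike.pow_mem_graded (A := fun n : ℕ => ⋀[K]^n M) k ha
  rw [smul_eq_mul, mul_comm] at this
  exact this

variable [Invertible (2 : K)] (Q : QuadraticForm K M)

/-- `equivExterior`, with values seen in a Clifford algebra. -/
noncomputable def phi : CliffordAlgebra Q ≃ₗ[K] CliffordAlgebra (0 : QuadraticForm K M) :=
  equivExterior Q

/-- Contraction by the vector `u` (with respect to `-Q`). -/
noncomputable def DD (u : M) :
    CliffordAlgebra (0 : QuadraticForm K M) →ₗ[K] CliffordAlgebra (0 : QuadraticForm K M) :=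
  contractLeft (QuadraticMap.associated (R := K) (-Q) u)

theorem phi_ι_mul (u : M) (x : CliffordAlgebra Q) :
    phi Q (ι Q u * x) = ι 0 u * phi Q x - DD Q u (phi Q x) :=
  changeForm_ι_mul changeForm.associated_neg_proof u x

theorem phi_ι (u : M) : phi Q (ι Q u) = ι 0 u :=
  changeForm_ι changeForm.associated_neg_proof u

theorem phi_algebraMap (r : K) : phi Q (algebraMap K _ r) = algebraMap K _ r :=
  changeForm_algebraMap changeForm.associated_neg_proof r

/-- The symmetric bilinear form of `-Q`. -/
noncomputable def cc (u w : M) : K := QuadraticMap.associated (R := K) (-Q) u w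

theorem DD_ι_mul (u w : M) (y : CliffordAlgebra (0 : QuadraticForm K M)) :
    DD Q u (ι 0 w * y) = cc Q u w • y - ι 0 w * DD Q u y :=
  contractLeft_ι_mul _ _ _

theorem phi_mul_ι (x : CliffordAlgebra Q) (v : M) :
    phi Q (x * ι Q v) = ι 0 v * involute (phi Q x) + DD Q v (involute (phi Q x)) := by
  induction x using CliffordAlgebra.left_induction with
  | algebraMap r =>
    rw [phi_algebraMap, ← Algebra.smul_def, map_smul, phi_ι, AlgHom.commutes, DD,
      contractLeft_algebraMap, add_zero, ← Algebra.commutes, Algebra.smul_def]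
  | add x y hx hy => simp only [add_mul, map_add, mul_add, hx, hy]; abel
  | ι_mul x u hx =>
    rw [mul_assoc, phi_ι_mul, hx, phi_ι_mul]
    have h1 : involute (DD Q u (phi Q x)) = - DD Q u (involute (phi Q x)) := by
      rw [DD, contract_involute, neg_neg]
    have h2 : ∀ z, DD Q u (DD Q v z) = - DD Q v (DD Q u z) := fun z => contractLeft_comm _ _ _
    have h3 : cc Q u v = cc Q v u := QuadraticMap.associated_isSymm K (-Q) u v
    simp only [map_sub, map_mul, involute_ι, h1, map_add, mul_add, mul_sub, DD_ι_mul, h2, neg_mul,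
      map_neg, mul_neg, h3]
    rw [← mul_assoc, ← mul_assoc, ext_anticomm u v]
    simp only [neg_mul]
    abel

theorem phi_bivector_mul {B : CliffordAlgebra Q} (hB : phi Q B ∈ ⋀[K]^2 M)
    (x : CliffordAlgebra Q) (m : ℕ) (hx : ∀ i, m < i → extP K M i (phi Q x) = 0) (i : ℕ)
    (hi : m ≤ i) : extP K M (i + 2) (phi Q (B * x)) = phi Q B * extP K M i (phi Q x) := by
  obtain ⟨a, rfl⟩ := (phi Q).symm.surjective B
  rw [LinearEquiv.apply_symm_apply] at hB ⊢
  induction hB using bivector_induction with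
  | hadd y z _ _ hy hz => simp only [map_add, add_mul, hy, hz]
  | hmul u w =>
    have e : (phi Q).symm (ι 0 u * ι 0 w) = ι Q u * ι Q w
        + algebraMap K _ (QuadraticMap.associated (R := K) (-Q) u w) := by
      rw [LinearEquiv.symm_apply_eq, map_add, phi_algebraMap, phi_ι_mul, phi_ι, DD, contractLeft_ι]
      abel
    have z2 : extP K M (i + 2) (phi Q x) = 0 := hx _ (by omega)
    have z4 : extP K M (i + 2 + 1 + 1) (phi Q x) = 0 := hx _ (by omega)
    have z1 : extP K M (i + 1 + 1) (phi Q x) = 0 := hx _ (by omega)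
    rw [e, add_mul, mul_assoc, ← Algebra.smul_def]
    simp only [map_add, map_smul, phi_ι_mul, map_sub, mul_sub, DD, z2, extP_ι_mul, extP_contract, z4,
      z1]
    simp [mul_assoc]

theorem phi_pow {B : CliffordAlgebra Q} (hB : phi Q B ∈ ⋀[K]^2 M) (j : ℕ) :
    extP K M (2 * j) (phi Q (B ^ j)) = phi Q B ^ j ∧
      ∀ i, 2 * j < i → extP K M i (phi Q (B ^ j)) = 0 := by
  induction j with
  | zero =>
    have h1 : phi Q (1 : CliffordAlgebra Q) = 1 := by simpa using phi_algebraMap Q 1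
    have h2 : (1 : CliffordAlgebra (0 : QuadraticForm K M)) ∈ ⋀[K]^0 M := by
      simpa using pow_mem_ext (hB) 0
    simp only [pow_zero, mul_zero, h1]
    exact ⟨extP_same h2, fun i hi => extP_ne h2 (by omega)⟩
  | succ j ih =>
    refine ⟨?_, fun i hi => ?_⟩
    · rw [pow_succ', pow_succ', mul_add, mul_one, phi_bivector_mul Q hB _ (2 * j) ih.2 _ le_rfl,
        ih.1]
    · obtain ⟨i, rfl⟩ : ∃ i', i = i' + 2 := ⟨i - 2, by omega⟩
      rw [pow_succ', phi_bivector_mul Q hB _ (2 * j) ih.2 _ (by omega), ih.2 _ (by omega), mul_zero]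

end WjAux

section WjMain

open CliffordAlgebra

variable {K : Type*} [Field K] [CharZero K] {M : Type*} [AddCommGroup M] [Module K M]
  (Q : QuadraticForm K M)

theorem Wj_dot_vector_general (B : CliffordAlgebra Q) (hB : IsGrade Q 2 B) (v : M) (k : ℕ) :
    gradeProj Q (2 * k + 1) (Wj Q B (k + 1) * ι Q v) =
      gradeProj Q (2 * k + 1) (Wj Q B k * cprod B (ι Q v)) := by
  letI : Invertible (2 : K) := invertibleOfNonzero two_ne_zero
  have gp : ∀ l x, gradeProj Q l x = (phi Q).symm (extP K M l (phi Q x)) := fun l x => rfl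
  have hb : phi Q B ∈ ⋀[K]^2 M := by
    have h : (phi Q).symm (extP K M 2 (phi Q B)) = B := hB
    rw [LinearEquiv.symm_apply_eq] at h
    rw [← h]; exact extP_mem _ _
  have hW : ∀ j, phi Q (Wj Q B j) = (j.factorial : K)⁻¹ • phi Q B ^ j := by
    intro j
    rw [Wj, map_smul, gp, LinearEquiv.apply_symm_apply, (phi_pow Q hb j).1]
  have hWm : ∀ j, phi Q (Wj Q B j) ∈ ⋀[K]^(2 * j) M := fun j => by
    rw [hW]; exact Submodule.smul_mem _ _ (pow_mem_ext hb j)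
  have hWi : ∀ j, involute (phi Q (Wj Q B j)) = phi Q (Wj Q B j) := fun j => by
    rw [hW, map_smul, map_pow, bivector_involute hb]
  obtain ⟨w, hw⟩ : ∃ w, DD Q v (phi Q B) = ι 0 w := contract_bivector _ hb
  have hc : cprod B (ι Q v) = ι Q w := by
    apply (phi Q).injective
    rw [cprod, map_smul, map_sub, phi_mul_ι, phi_ι_mul, bivector_involute hb, phi_ι, hw,
      add_sub_sub_cancel, ← two_smul K, smul_smul, inv_mul_cancel₀ two_ne_zero, one_smul]
  rw [gp, gp, hc, phi_mul_ι, phi_mul_ι, hWi, hWi, map_add (extP K M _), map_add (extP K M _), extP_ι_mul, extP_ι_mul, DD, DD,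
    extP_contract, extP_contract, extP_ne (hWm (k + 1)) (by omega), show 2 * k + 1 + 1 = 2 * (k + 1) by ring, extP_same (hWm (k + 1)),
    extP_same (hWm k), extP_ne (hWm k) (by omega), map_zero, mul_zero, zero_add, add_zero]
  congr 1
  rw [hW, hW, map_smul, contract_pow _ hb]
  change _ • _ • (_ * DD Q v (phi Q B)) = _
  rw [hw, mul_smul_comm, ((bivector_comm hb w).pow_left k).eq, smul_smul]
  congr 1
  rw [Nat.factorial_succ]
  have : (k.factorial : K) ≠ 0 := by exact_mod_cast k.factorial_ne_zero
  have : (k : K) + 1 ≠ 0 := by exact_mod_cast k.succ_ne_zero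
  push_cast
  field_simp

end WjMain


open CliffordAlgebra in
/-- for a bivector `B` and a vector `v`, with `w := B × v`, one has
`W_j · v = W_{j-1} ∧ w`, i.e. `⟨W_j v⟩_{2j-1} = ⟨W_{j-1} w⟩_{2j-1}`, for every `j ≥ 1`. -/
theorem Wj_dot_vector (p q r : ℕ) (B : CliffordAlgebra (sigQ p q r))
    (hB : IsGrade (sigQ p q r) 2 B) (v : Fin (p + q + r) → ℝ) (j : ℕ) (hj : 1 ≤ j) :
    gradeProj (sigQ p q r) (2 * j - 1) (Wj (sigQ p q r) B j * ι (sigQ p q r) v) =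
      gradeProj (sigQ p q r) (2 * j - 1)
        (Wj (sigQ p q r) B (j - 1) * cprod B (ι (sigQ p q r) v)) := by
  obtain ⟨k, rfl⟩ : ∃ k, j = k + 1 := ⟨j - 1, by omega⟩
  exact Wj_dot_vector_general (sigQ p q r) B hB v k
end

section
/- Let B be a bivector in ℝ_{p,q,r} with effective dimension 2k and effective pseudoscalar W_k. Then: (1) for every vector v, writing w := B × v, one has W_k ∧ w = 0; and (2) the square W_k² is a real scalar, i.e. W_k² ∈ ℝ. -/
namespace EffPs

open CliffordAlgebra

section Ext

variable {K : Type*} [Field K] {M : Type*} [AddCommGroup M] [Module K M]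

/-- Vectors in the exterior algebra. -/
abbrev e (m : M) : ExteriorAlgebra K M := ι (0 : QuadraticForm K M) m

/-- Contraction in the exterior algebra. -/
abbrev ctr (d : Module.Dual K M) : ExteriorAlgebra K M →ₗ[K] ExteriorAlgebra K M :=
  contractLeft (Q := (0 : QuadraticForm K M)) d

theorem ctr_e_mul (d : Module.Dual K M) (m : M) (x : ExteriorAlgebra K M) :
    ctr d (e m * x) = d m • x - e m * ctr d x :=
  contractLeft_ι_mul (Q := (0 : QuadraticForm K M)) d m x

theorem ctr_e (d : Module.Dual K M) (m : M) :
    ctr d (e m) = algebraMap K _ (d m) :=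
  contractLeft_ι (Q := (0 : QuadraticForm K M)) d m

theorem e_anti (p q : M) : (e p * e q : ExteriorAlgebra K M) = - (e q * e p) := by
  rw [eq_neg_iff_add_eq_zero]
  simp

theorem e_mem (m : M) : (e m : ExteriorAlgebra K M) ∈ ⋀[K]^1 M := by
  rw [ExteriorAlgebra.exteriorPower, pow_one]; exact LinearMap.mem_range_self _ m

theorem e_mul_mem {n : ℕ} (m : M) {x : ExteriorAlgebra K M} (hx : x ∈ ⋀[K]^n M) :
    e m * x ∈ ⋀[K]^(n + 1) M := by
  rw [ExteriorAlgebra.exteriorPower, pow_succ']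
  exact Submodule.mul_mem_mul (LinearMap.mem_range_self _ m) hx

theorem pow_ind {n : ℕ} {C : ExteriorAlgebra K M → Prop}
    (hadd : ∀ x y, C x → C y → C (x + y))
    (hmul : ∀ m x, x ∈ ⋀[K]^n M → C (e m * x)) {x : ExteriorAlgebra K M}
    (hx : x ∈ ⋀[K]^(n + 1) M) : C x := by
  rw [ExteriorAlgebra.exteriorPower, pow_succ'] at hx
  refine Submodule.mul_induction_on hx ?_ hadd
  rintro _ ⟨m, rfl⟩ y hy
  exact hmul m y hy

theorem biv_ind {C : ExteriorAlgebra K M → Prop}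
    (hadd : ∀ x y, C x → C y → C (x + y))
    (hmul : ∀ p q : M, C (e p * e q)) {x : ExteriorAlgebra K M}
    (hx : x ∈ ⋀[K]^2 M) : C x := by
  refine pow_ind (n := 1) hadd ?_ hx
  intro m y hy
  rw [ExteriorAlgebra.exteriorPower, pow_one] at hy
  obtain ⟨q, rfl⟩ := hy
  exact hmul m q

theorem ctr_zero_mem (d : Module.Dual K M) {x : ExteriorAlgebra K M}
    (hx : x ∈ ⋀[K]^0 M) : ctr d x = 0 := by
  rw [ExteriorAlgebra.exteriorPower, pow_zero, Submodule.mem_one] at hx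
  obtain ⟨r, rfl⟩ := hx
  exact contractLeft_algebraMap (0 : QuadraticForm K M) d r

theorem ctr_mem (d : Module.Dual K M) {n : ℕ} {x : ExteriorAlgebra K M}
    (hx : x ∈ ⋀[K]^(n + 1) M) : ctr d x ∈ ⋀[K]^n M := by
  induction n generalizing x with
  | zero =>
    refine pow_ind (C := fun x => ctr d x ∈ ⋀[K]^_ M) (fun x y hx hy => ?_) ?_ hx
    · rw [map_add]; exact add_mem hx hy
    · intro m y hy
      rw [ctr_e_mul, ctr_zero_mem d hy, mul_zero, sub_zero]
      exact Submodule.smul_mem _ _ hy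
  | succ n ih =>
    refine pow_ind (C := fun x => ctr d x ∈ ⋀[K]^_ M) (fun x y hx hy => ?_) ?_ hx
    · rw [map_add]; exact add_mem hx hy
    · intro m y hy
      rw [ctr_e_mul]
      exact sub_mem (Submodule.smul_mem _ _ hy) (e_mul_mem m (ih hy))

/-- Grade component in the exterior algebra. -/
def pr (n : ℕ) (x : ExteriorAlgebra K M) : ExteriorAlgebra K M :=
  (DirectSum.decompose (fun n : ℕ => ⋀[K]^n M) x n : ExteriorAlgebra K M)

theorem pr_add (n : ℕ) (x y : ExteriorAlgebra K M) : pr n (x + y) = pr n x + pr n y := by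
  simp [pr, DirectSum.decompose_add]

theorem pr_zero (n : ℕ) : pr n (0 : ExteriorAlgebra K M) = 0 := by
  simp [pr]

theorem pr_same {n : ℕ} {x : ExteriorAlgebra K M} (hx : x ∈ ⋀[K]^n M) : pr n x = x :=
  DirectSum.decompose_of_mem_same (fun n : ℕ => ⋀[K]^n M) hx

theorem pr_ne {n m : ℕ} {x : ExteriorAlgebra K M} (hx : x ∈ ⋀[K]^n M) (h : n ≠ m) :
    pr m x = 0 :=
  DirectSum.decompose_of_mem_ne (fun n : ℕ => ⋀[K]^n M) hx h

theorem pr_mem (n : ℕ) (x : ExteriorAlgebra K M) : pr n x ∈ ⋀[K]^n M :=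
  SetLike.coe_mem _

theorem pr_e_mul (n : ℕ) (m : M) (x : ExteriorAlgebra K M) :
    pr (n + 1) (e m * x) = e m * pr n x :=
  DirectSum.coe_decompose_mul_of_left_mem_of_le (fun n : ℕ => ⋀[K]^n M) (e_mem m)
    (Nat.le_add_left 1 n)

theorem pr_ctr (n : ℕ) (d : Module.Dual K M) (x : ExteriorAlgebra K M) :
    pr n (ctr d x) = ctr d (pr (n + 1) x) := by
  induction x using DirectSum.Decomposition.inductionOn (fun i => ⋀[K]^i M) with
  | zero => simp [pr_zero]
  | add a b ha hb => simp only [map_add, pr_add, ha, hb]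
  | @homogeneous i a =>
    obtain ⟨a, ha⟩ := a
    rcases i with _ | i
    · simp only
      rw [ctr_zero_mem d ha, pr_zero, pr_ne ha (by omega), map_zero]
    · simp only
      by_cases h : i = n
      · subst h; rw [pr_same ha, pr_same (ctr_mem d ha)]
      · rw [pr_ne ha (by omega), pr_ne (ctr_mem d ha) h, map_zero]

/-- contraction with a bivector factor is a derivation -/
theorem ctr_biv_mul (d : Module.Dual K M) {b : ExteriorAlgebra K M} (hb : b ∈ ⋀[K]^2 M)
    (y : ExteriorAlgebra K M) : ctr d (b * y) = ctr d b * y + b * ctr d y := by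
  refine biv_ind (C := fun b => ctr d (b * y) = ctr d b * y + b * ctr d y) ?_ ?_ hb
  · intro x z hx hz
    simp only [add_mul, map_add, hx, hz]; abel
  · intro p q
    rw [mul_assoc, ctr_e_mul, ctr_e_mul, ctr_e_mul, ctr_e, ← Algebra.commutes, ← Algebra.smul_def]
    simp only [mul_sub, sub_mul, smul_mul_assoc, mul_smul_comm, mul_assoc]
    abel

theorem biv_comm {b : ExteriorAlgebra K M} (hb : b ∈ ⋀[K]^2 M) (w : M) :
    b * e w = e w * b := by
  refine biv_ind (C := fun b => b * e w = e w * b) ?_ ?_ hb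
  · intro x z hx hz
    rw [add_mul, mul_add, hx, hz]
  · intro p q
    rw [mul_assoc, e_anti q w, mul_neg, ← mul_assoc, e_anti p w, neg_mul, neg_neg, mul_assoc]

theorem ctr_biv (d : Module.Dual K M) {b : ExteriorAlgebra K M} (hb : b ∈ ⋀[K]^2 M) :
    ∃ z : M, ctr d b = e z := by
  have h := ctr_mem d (n := 1) hb
  rw [ExteriorAlgebra.exteriorPower, pow_one] at h
  obtain ⟨z, hz⟩ := h
  exact ⟨z, hz.symm⟩

theorem ctr_biv_pow (d : Module.Dual K M) {b : ExteriorAlgebra K M} (hb : b ∈ ⋀[K]^2 M)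
    (k : ℕ) : ctr d (b ^ (k + 1)) = ((k + 1 : ℕ) : K) • (ctr d b * b ^ k) := by
  obtain ⟨z, hz⟩ := ctr_biv d hb
  induction k with
  | zero => simp
  | succ k ih =>
    rw [pow_succ', ctr_biv_mul d hb, ih, mul_smul_comm, hz, ← mul_assoc, biv_comm hb, mul_assoc,
      ← pow_succ', Nat.cast_succ (k + 1), add_smul, one_smul, add_comm]

theorem pow_mem {b : ExteriorAlgebra K M} (hb : b ∈ ⋀[K]^2 M) (k : ℕ) :
    b ^ k ∈ ⋀[K]^(2 * k) M := by
  rw [ExteriorAlgebra.exteriorPower, pow_mul]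
  exact Submodule.pow_mem_pow _ hb k

theorem wedge_zero [CharZero K] (d : Module.Dual K M) {b : ExteriorAlgebra K M}
    (hb : b ∈ ⋀[K]^2 M) (k : ℕ) (hk : b ^ (k + 1) = 0) : ctr d b * b ^ k = 0 := by
  have h := ctr_biv_pow d hb k
  rw [hk, map_zero] at h
  exact (smul_eq_zero.mp h.symm).resolve_left (Nat.cast_ne_zero.mpr (Nat.succ_ne_zero k))

/-- The support of a bivector. -/
def supp (b : ExteriorAlgebra K M) : Submodule K M where
  carrier := {z | ∃ d : Module.Dual K M, ctr d b = e z}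
  add_mem' := by
    rintro x y ⟨d, hd⟩ ⟨f, hf⟩
    refine ⟨d + f, ?_⟩
    simp only [ctr, e, map_add, LinearMap.add_apply] at *
    rw [hd, hf]
  zero_mem' := ⟨0, by simp [ctr, e]⟩
  smul_mem' := by
    rintro c x ⟨d, hd⟩
    refine ⟨c • d, ?_⟩
    simp only [ctr, e, map_smul, LinearMap.smul_apply] at *
    rw [hd]

theorem ctr_supp_zero {b : ExteriorAlgebra K M} (hb : b ∈ ⋀[K]^2 M) (g : Module.Dual K M)
    (hg : ∀ z ∈ supp b, g z = 0) : ctr g b = 0 := by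
  obtain ⟨z, hz⟩ := ctr_biv g hb
  rw [hz]
  have : z = 0 := by
    rw [← Module.forall_dual_apply_eq_zero_iff K]
    intro h
    obtain ⟨y, hy⟩ := ctr_biv h hb
    have h1 : ctr h (ctr g b) = - ctr g (ctr h b) := contractLeft_comm _ _ _
    rw [hz, hy, ctr_e, ctr_e, hg y ⟨h, hy⟩, map_zero, neg_zero] at h1
    exact (algebraMap K (ExteriorAlgebra K M)).injective (by rw [h1, map_zero])
  rw [this]; simp [e]

theorem euler {ν : Type*} [Fintype ν] (bs : Module.Basis ν K M) {b : ExteriorAlgebra K M}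
    (hb : b ∈ ⋀[K]^2 M) : ∑ i, e (bs i) * ctr (bs.coord i) b = (2 : K) • b := by
  refine biv_ind (C := fun b => ∑ i, e (bs i) * ctr (bs.coord i) b = (2 : K) • b) ?_ ?_ hb
  · intro x z hx hz
    simp only [map_add, mul_add, Finset.sum_add_distrib, hx, hz, smul_add]
  · intro p q
    have key : ∀ m : M, ∑ i, (bs.coord i m) • (e (bs i) : ExteriorAlgebra K M) = e m := by
      intro m
      have h := congrArg (ι (0 : QuadraticForm K M)) (bs.sum_repr m)
      simp only [map_sum, map_smul] at h
      exact h
    have : ∀ i, (e (bs i) : ExteriorAlgebra K M) * ctr (bs.coord i) (e p * e q)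
        = ((bs.coord i p) • e (bs i)) * e q - ((bs.coord i q) • e (bs i)) * e p := by
      intro i
      rw [ctr_e_mul, ctr_e, ← Algebra.commutes, ← Algebra.smul_def, mul_sub, mul_smul_comm,
        mul_smul_comm, smul_mul_assoc, smul_mul_assoc]
    simp_rw [this]
    rw [Finset.sum_sub_distrib, ← Finset.sum_mul, ← Finset.sum_mul, key, key, e_anti q p, two_smul,
      sub_neg_eq_add]

/-- A bivector is a sum of products of vectors in its support. -/
theorem biv_repr [CharZero K] {ν : Type*} [Fintype ν] (bs : Module.Basis ν K M)
    {b : ExteriorAlgebra K M} (hb : b ∈ ⋀[K]^2 M) :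
    ∃ P R : ν → M, (∀ i, P i ∈ supp b) ∧ (∀ i, R i ∈ supp b) ∧ b = ∑ i, e (P i) * e (R i) := by
  choose w hw using fun i => ctr_biv (bs.coord i) hb
  obtain ⟨f, hf⟩ := LinearMap.exists_leftInverse_of_injective (supp b).subtype
    (Submodule.ker_subtype _)
  have hfz : ∀ z (hz : z ∈ supp b), f z = ⟨z, hz⟩ := fun z hz => LinearMap.congr_fun hf ⟨z, hz⟩
  let σ : M →ₗ[K] M := LinearMap.id - (supp b).subtype ∘ₗ f
  have hσ : ∀ z ∈ supp b, σ z = 0 := by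
    intro z hz
    simp [σ, hfz z hz]
  have key : ∀ m : M, ∑ j, (bs.coord j m) • (e (bs j) : ExteriorAlgebra K M) = e m := by
    intro m
    have h := congrArg (ι (0 : QuadraticForm K M)) (bs.sum_repr m)
    simp only [map_sum, map_smul] at h
    exact h
  have hd : ∀ j, ∑ i, (bs.coord j (σ (bs i))) • bs.coord i = bs.coord j ∘ₗ σ := by
    intro j
    refine bs.ext fun l => ?_
    classical
    simp [Finsupp.single_apply]
  have h0 : ∑ i, e (σ (bs i)) * ctr (bs.coord i) b = 0 := by
    calc ∑ i, e (σ (bs i)) * ctr (bs.coord i) b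
        = ∑ i, ∑ j, e (bs j) * (bs.coord j (σ (bs i)) • ctr (bs.coord i) b) := by
          refine Finset.sum_congr rfl fun i _ => ?_
          rw [← key (σ (bs i)), Finset.sum_mul]
          refine Finset.sum_congr rfl fun j _ => ?_
          rw [smul_mul_assoc, mul_smul_comm]
      _ = ∑ j, e (bs j) * ctr (bs.coord j ∘ₗ σ) b := by
          rw [Finset.sum_comm]
          refine Finset.sum_congr rfl fun j _ => ?_
          rw [← Finset.mul_sum, ← hd j]
          simp only [ctr, map_sum, map_smul, LinearMap.sum_apply, LinearMap.smul_apply]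
      _ = 0 := by
          refine Finset.sum_eq_zero fun j _ => ?_
          rw [ctr_supp_zero hb, mul_zero]
          intro z hz
          simp [hσ z hz]
  refine ⟨fun i => (2 : K)⁻¹ • (f (bs i) : M), w, fun i => Submodule.smul_mem _ _ (f (bs i)).2,
    fun i => ⟨_, hw i⟩, ?_⟩
  have h1 := euler bs hb
  have h2 : ∑ i, e (f (bs i) : M) * ctr (bs.coord i) b = (2 : K) • b := by
    rw [← h1, ← sub_eq_zero, ← Finset.sum_sub_distrib, ← neg_eq_zero, ← Finset.sum_neg_distrib,
      ← h0]
    refine Finset.sum_congr rfl fun i _ => ?_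
    rw [neg_sub, ← sub_mul]
    simp [σ, e]
  have h3 : b = (2 : K)⁻¹ • ((2 : K) • b) := by
    rw [smul_smul, inv_mul_cancel₀ two_ne_zero, one_smul]
  refine h3.trans ?_
  rw [← h2, Finset.smul_sum]
  refine Finset.sum_congr rfl fun i _ => ?_
  rw [hw i]
  simp [e]

end Ext

section Cl

variable {K : Type*} [Field K] [CharZero K] {M : Type*} [AddCommGroup M] [Module K M]

theorem pr_smul (n : ℕ) (c : K) (x : ExteriorAlgebra K M) : pr n (c • x) = c • pr n x := by
  rw [pr, DirectSum.decompose_smul]; rfl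

/-- The canonical linear identification with the exterior algebra. -/
noncomputable def ph (Q : QuadraticForm K M) : CliffordAlgebra Q ≃ₗ[K] ExteriorAlgebra K M :=
  letI : Invertible (2 : K) := invertibleOfNonzero two_ne_zero
  equivExterior Q

/-- The symmetric bilinear form. -/
noncomputable def bt (Q : QuadraticForm K M) (m : M) : Module.Dual K M :=
  letI : Invertible (2 : K) := invertibleOfNonzero two_ne_zero
  QuadraticMap.associated (R := K) Q m

variable (Q : QuadraticForm K M)

theorem ph_ι_mul (m : M) (x : CliffordAlgebra Q) :
    ph Q (ι Q m * x) = e m * ph Q x + ctr (bt Q m) (ph Q x) := by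
  letI : Invertible (2 : K) := invertibleOfNonzero two_ne_zero
  have h := changeForm_ι_mul (changeForm.associated_neg_proof (Q := Q)) m x
  have h2 : (QuadraticMap.associated (R := K) (-Q)) m = - bt Q m := by
    rw [map_neg]; rfl
  have h3 : contractLeft (Q := (0 : QuadraticForm K M))
      ((QuadraticMap.associated (R := K) (-Q)) m) = - ctr (bt Q m) := by
    rw [h2, map_neg]
  refine h.trans ?_
  refine (congrArg (fun t : ExteriorAlgebra K M →ₗ[K] ExteriorAlgebra K M =>
    e m * ph Q x - t (ph Q x)) h3).trans ?_
  simp only [LinearMap.neg_apply, sub_neg_eq_add]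

theorem ph_ctr (d : Module.Dual K M) (x : CliffordAlgebra Q) :
    ph Q (contractLeft d x) = ctr d (ph Q x) := by
  letI : Invertible (2 : K) := invertibleOfNonzero two_ne_zero
  exact changeForm_contractLeft (changeForm.associated_neg_proof (Q := Q)) d x

theorem ph_algebraMap (c : K) : ph Q (algebraMap K _ c) = algebraMap K _ c := by
  letI : Invertible (2 : K) := invertibleOfNonzero two_ne_zero
  exact changeForm_algebraMap (changeForm.associated_neg_proof (Q := Q)) c

theorem ph_ι (m : M) : ph Q (ι Q m) = e m := by
  letI : Invertible (2 : K) := invertibleOfNonzero two_ne_zero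
  exact changeForm_ι (changeForm.associated_neg_proof (Q := Q)) m

theorem ph_symm_one : (ph Q).symm 1 = 1 := by
  rw [LinearEquiv.symm_apply_eq, ← map_one (algebraMap K (CliffordAlgebra Q)), ph_algebraMap,
    map_one]

theorem bt_spec (w v : M) :
    ι Q w * ι Q v + ι Q v * ι Q w = algebraMap K _ (2 * bt Q w v) := by
  letI : Invertible (2 : K) := invertibleOfNonzero two_ne_zero
  rw [ι_mul_ι_add_swap]
  congr 1
  have := QuadraticMap.two_nsmul_associated K Q
  have h := LinearMap.congr_fun (LinearMap.congr_fun this w) v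
  refine h.symm.trans ?_
  rw [LinearMap.smul_apply, LinearMap.smul_apply, nsmul_eq_mul]
  rfl

theorem clif_ctr (w : M) (x : CliffordAlgebra Q) :
    ι Q w * x - involute x * ι Q w = (2 : K) • contractLeft (bt Q w) x := by
  induction x using CliffordAlgebra.left_induction with
  | algebraMap r => simp [Algebra.commutes]
  | add x y hx hy =>
    rw [mul_add, map_add, map_add, smul_add, ← hx, ← hy, add_mul]; abel
  | ι_mul x v hx =>
    rw [contractLeft_ι_mul, smul_sub, ← mul_smul_comm, ← hx, smul_smul, Algebra.smul_def,
      ← bt_spec, map_mul, involute_ι]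
    noncomm_ring

theorem wd (w : M) (y : ExteriorAlgebra K M) :
    (ph Q).symm (e w * y) = ι Q w * (ph Q).symm y - contractLeft (bt Q w) ((ph Q).symm y) := by
  rw [LinearEquiv.symm_apply_eq, map_sub, ph_ι_mul, ph_ctr, LinearEquiv.apply_symm_apply,
    add_sub_cancel_right]

theorem wd_half (w : M) (y : ExteriorAlgebra K M) :
    (2 : K) • (ph Q).symm (e w * y)
      = ι Q w * (ph Q).symm y + involute ((ph Q).symm y) * ι Q w := by
  rw [wd, smul_sub, ← clif_ctr, two_smul]
  abel

theorem smul_two_inj {A : Type*} [AddCommGroup A] [Module K A] {x y : A}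
    (h : (2 : K) • x = (2 : K) • y) : x = y :=
  smul_right_injective A (two_ne_zero (α := K)) h

theorem mainA (w : M) (X : CliffordAlgebra Q) (hX : involute X = X)
    (hw : ι Q w * X = - (X * ι Q w)) (y : ExteriorAlgebra K M) :
    (ph Q).symm (e w * y) * X = contractLeft (bt Q w) ((ph Q).symm y * X) := by
  apply smul_two_inj (K := K)
  rw [← smul_mul_assoc, wd_half, ← clif_ctr, map_mul, hX, add_mul, mul_assoc _ (ι Q w) X, hw]
  noncomm_ring

theorem anti (w : M) (X : CliffordAlgebra Q) (hX : involute X = X)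
    (hw : e w * ph Q X = 0) : ι Q w * X = - (X * ι Q w) := by
  have h := wd_half Q w (ph Q X)
  rw [hw, map_zero, smul_zero, LinearEquiv.symm_apply_apply, hX] at h
  exact eq_neg_of_add_eq_zero_left h.symm

theorem inv_wd (w : M) (y : ExteriorAlgebra K M) :
    involute ((ph Q).symm (e w * y))
      = - (ph Q).symm (e w * ph Q (involute ((ph Q).symm y))) := by
  apply smul_two_inj (K := K)
  rw [← map_smul, wd_half, smul_neg, wd_half, LinearEquiv.symm_apply_apply, involute_involute,
    map_add, map_mul, map_mul, involute_involute, involute_ι]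
  noncomm_ring

theorem inv_biv {b : ExteriorAlgebra K M} (hb : b ∈ ⋀[K]^2 M) (y : ExteriorAlgebra K M) :
    involute ((ph Q).symm (b * y)) = (ph Q).symm (b * ph Q (involute ((ph Q).symm y))) := by
  refine biv_ind (C := fun b => involute ((ph Q).symm (b * y))
    = (ph Q).symm (b * ph Q (involute ((ph Q).symm y)))) ?_ ?_ hb
  · intro x z hx hz
    rw [add_mul, add_mul, map_add, map_add, map_add, hx, hz]
  · intro p q
    rw [mul_assoc, inv_wd, inv_wd, map_neg, LinearEquiv.apply_symm_apply, mul_neg, map_neg,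
      neg_neg, mul_assoc]

theorem inv_pow {b : ExteriorAlgebra K M} (hb : b ∈ ⋀[K]^2 M) (k : ℕ) :
    involute ((ph Q).symm (b ^ k)) = (ph Q).symm (b ^ k) := by
  induction k with
  | zero => rw [pow_zero, ph_symm_one, map_one]
  | succ k ih => rw [pow_succ', inv_biv Q hb, ih, LinearEquiv.apply_symm_apply]

theorem step_vec (w : M) (Z : CliffordAlgebra Q) (m : ℕ)
    (hZ : ∀ l, m < l → pr l (ph Q Z) = 0) :
    (∀ l, m + 1 < l → pr l (ph Q (ι Q w * Z)) = 0) ∧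
      pr (m + 1) (ph Q (ι Q w * Z)) = e w * pr m (ph Q Z) := by
  constructor
  · rintro (_ | l) hl
    · omega
    · rw [ph_ι_mul, pr_add, pr_e_mul, pr_ctr, hZ l (by omega), hZ (l + 1 + 1) (by omega), mul_zero,
        map_zero, add_zero]
  · rw [ph_ι_mul, pr_add, pr_e_mul, pr_ctr, hZ (m + 1 + 1) (by omega), map_zero, add_zero]

theorem step_biv {b : ExteriorAlgebra K M} (hb : b ∈ ⋀[K]^2 M) (Z : CliffordAlgebra Q) (m : ℕ)
    (hZ : ∀ l, m < l → pr l (ph Q Z) = 0) :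
    (∀ l, m + 2 < l → pr l (ph Q ((ph Q).symm b * Z)) = 0) ∧
      pr (m + 2) (ph Q ((ph Q).symm b * Z)) = b * pr m (ph Q Z) := by
  refine biv_ind (C := fun b => (∀ l, m + 2 < l → pr l (ph Q ((ph Q).symm b * Z)) = 0) ∧
      pr (m + 2) (ph Q ((ph Q).symm b * Z)) = b * pr m (ph Q Z)) ?_ ?_ hb
  · rintro x z ⟨hx1, hx2⟩ ⟨hz1, hz2⟩
    constructor
    · intro l hl
      rw [map_add, add_mul, map_add, pr_add, hx1 l hl, hz1 l hl, add_zero]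
    · rw [map_add, add_mul, map_add, pr_add, hx2, hz2, add_mul]
  · intro p q
    have hq : (ph Q).symm (e q) = ι Q q := by
      rw [LinearEquiv.symm_apply_eq, ph_ι]
    have hpq : ph Q ((ph Q).symm (e p * e q) * Z)
        = ph Q (ι Q p * (ι Q q * Z)) + (-(bt Q p q)) • ph Q Z := by
      rw [wd, hq, contractLeft_ι, sub_mul, ← Algebra.smul_def, map_sub, map_smul, mul_assoc,
        neg_smul, sub_eq_add_neg]
    obtain ⟨h1, h2⟩ := step_vec Q q Z m hZ
    obtain ⟨h3, h4⟩ := step_vec Q p _ (m + 1) h1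
    rw [hpq]
    constructor
    · intro l hl
      rw [pr_add, pr_smul, h3 l hl, hZ l (by omega), smul_zero, add_zero]
    · rw [pr_add, pr_smul, hZ (m + 2) (by omega), smul_zero, add_zero, h4, h2, mul_assoc]

theorem top_pow {b : ExteriorAlgebra K M} (hb : b ∈ ⋀[K]^2 M) (j : ℕ) :
    (∀ l, 2 * j < l → pr l (ph Q ((ph Q).symm b ^ j)) = 0) ∧
      pr (2 * j) (ph Q ((ph Q).symm b ^ j)) = b ^ j := by
  induction j with
  | zero =>
    have h1 : ph Q ((ph Q).symm b ^ 0) = 1 := by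
      rw [pow_zero, ← ph_symm_one Q, LinearEquiv.apply_symm_apply]
    have h2 : (1 : ExteriorAlgebra K M) ∈ ⋀[K]^0 M := by
      rw [ExteriorAlgebra.exteriorPower, pow_zero]; exact Submodule.one_le.mp le_rfl
    rw [h1]
    exact ⟨fun l hl => pr_ne h2 (by omega), by rw [pow_zero]; exact pr_same h2⟩
  | succ j ih =>
    obtain ⟨h1, h2⟩ := step_biv Q hb _ _ ih.1
    rw [pow_succ', show 2 * (j + 1) = 2 * j + 2 by ring]
    refine ⟨h1, ?_⟩
    rw [h2, ih.2, pow_succ']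

theorem gradeProj_eq (l : ℕ) (x : CliffordAlgebra Q) :
    gradeProj Q l x = (ph Q).symm (pr l (ph Q x)) := rfl

theorem Wj_eq (B : CliffordAlgebra Q) (hb : ph Q B ∈ ⋀[K]^2 M) (j : ℕ) :
    Wj Q B j = ((j.factorial : K)⁻¹) • (ph Q).symm (ph Q B ^ j) := by
  have h := (top_pow Q hb j).2
  rw [LinearEquiv.symm_apply_apply] at h
  rw [Wj, gradeProj_eq, h]

theorem main {ν : Type*} [Fintype ν] (bs : Module.Basis ν K M) (B : CliffordAlgebra Q)
    (hB : IsGrade Q 2 B) (k : ℕ) (hk : HasEffDim Q B k) :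
    (∀ v : M, gradeProj Q (2 * k + 1) (Wj Q B k * cprod B (ι Q v)) = 0) ∧
    (∃ c : K, Wj Q B k * Wj Q B k = algebraMap K (CliffordAlgebra Q) c) := by
  have hb : ph Q B ∈ ⋀[K]^2 M := by
    have h : (ph Q).symm (pr 2 (ph Q B)) = B := hB
    rw [LinearEquiv.symm_apply_eq] at h
    rw [← h]
    exact pr_mem _ _
  set b := ph Q B with hbdef
  have hBb : B = (ph Q).symm b := by rw [hbdef, LinearEquiv.symm_apply_apply]
  have hk1 : b ^ (k + 1) = 0 := by
    have h := hk.2 (k + 1) (Nat.lt_succ_self k)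
    rw [Wj_eq Q B hb] at h
    have h2 := (smul_eq_zero.mp h).resolve_left
      (inv_ne_zero (Nat.cast_ne_zero.mpr (Nat.factorial_ne_zero _)))
    exact (LinearEquiv.map_eq_zero_iff _).mp h2
  obtain ⟨X, hXdef⟩ : ∃ X, X = (ph Q).symm (b ^ k) := ⟨_, rfl⟩
  have hphX : ph Q X = b ^ k := by rw [hXdef, LinearEquiv.apply_symm_apply]
  have hXinv : involute X = X := by rw [hXdef]; exact inv_pow Q hb k
  have hwz : ∀ w ∈ supp b, e w * ph Q X = 0 := by
    rintro w ⟨d, hd⟩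
    rw [hphX, ← hd]
    exact wedge_zero d hb k hk1
  have hW : Wj Q B k = ((k.factorial : K)⁻¹) • X := by rw [Wj_eq Q B hb, hXdef]
  constructor
  · intro v
    obtain ⟨z, hz⟩ := ctr_biv (bt Q v) hb
    have hBinv : involute B = B := by
      have := inv_pow Q hb 1
      rwa [pow_one, ← hBb] at this
    have hc : cprod B (ι Q v) = - ι Q z := by
      have h1 := clif_ctr Q v B
      rw [hBinv] at h1
      have h2 : contractLeft (bt Q v) B = ι Q z := by
        apply (ph Q).injective
        rw [ph_ctr, ph_ι, ← hbdef, hz]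
      rw [cprod, ← neg_sub, h1, h2, smul_neg, smul_smul, inv_mul_cancel₀ two_ne_zero, one_smul]
    have hzs : z ∈ supp b := ⟨_, hz⟩
    have ha := anti Q z X hXinv (hwz z hzs)
    have h3 : ph Q (Wj Q B k * cprod B (ι Q v))
        = ((k.factorial : K)⁻¹) • ctr (bt Q z) (b ^ k) := by
      rw [hW, hc, mul_neg, smul_mul_assoc, ← smul_neg, ← ha, map_smul, ph_ι_mul, hwz z hzs,
        zero_add, hphX]
    rw [gradeProj_eq, h3, pr_smul, pr_ctr, pr_ne (pow_mem hb k) (by omega), map_zero, smul_zero,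
      map_zero]
  · obtain ⟨P, R, hP, hR, hPR⟩ := biv_repr bs hb
    have step : ∀ y, (ph Q).symm (b * y) * X
        = ∑ i, contractLeft (bt Q (P i)) (contractLeft (bt Q (R i)) ((ph Q).symm y * X)) := by
      intro y
      conv_lhs => rw [hPR]
      rw [Finset.sum_mul, map_sum, Finset.sum_mul]
      refine Finset.sum_congr rfl fun i _ => ?_
      rw [mul_assoc, mainA Q _ X hXinv (anti Q _ X hXinv (hwz _ (hP i))),
        mainA Q _ X hXinv (anti Q _ X hXinv (hwz _ (hR i)))]
    have ind : ∀ j i, j + i = k → ph Q ((ph Q).symm (b ^ j) * X) ∈ ⋀[K]^(2 * i) M := by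
      intro j
      induction j with
      | zero =>
        intro i hi
        rw [pow_zero, ph_symm_one, one_mul, hphX, show i = k by omega]
        exact pow_mem hb k
      | succ j ih =>
        intro i hi
        have h := ih (i + 1) (by omega)
        rw [pow_succ', step, map_sum]
        refine Submodule.sum_mem _ fun l _ => ?_
        rw [ph_ctr, ph_ctr]
        exact ctr_mem _ (ctr_mem _ h)
    have h0 := ind k 0 rfl
    rw [← hXdef, mul_zero, ExteriorAlgebra.exteriorPower, pow_zero, Submodule.mem_one] at h0
    obtain ⟨c, hc⟩ := h0
    have hXX : X * X = algebraMap K _ c := by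
      apply (ph Q).injective
      rw [ph_algebraMap, hc]
    refine ⟨(k.factorial : K)⁻¹ * ((k.factorial : K)⁻¹ * c), ?_⟩
    rw [hW, smul_mul_assoc, mul_smul_comm, hXX, map_mul, map_mul, Algebra.smul_def,
      Algebra.smul_def]

end Cl
end EffPs

open CliffordAlgebra in
/-- for a bivector `B` with effective dimension `2k` and effective
pseudoscalar `W_k`: (1) for every vector `v`, with `w := B × v`, one has `W_k ∧ w = 0`;
(2) `W_k²` is a real scalar. -/
theorem effPseudoscalar_wedge_and_sq (p q r : ℕ) (B : CliffordAlgebra (sigQ p q r))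
    (hB : IsGrade (sigQ p q r) 2 B) (k : ℕ) (hk : HasEffDim (sigQ p q r) B k) :
    (∀ v : Fin (p + q + r) → ℝ,
      gradeProj (sigQ p q r) (2 * k + 1)
        (Wj (sigQ p q r) B k * cprod B (ι (sigQ p q r) v)) = 0) ∧
    (∃ c : ℝ, Wj (sigQ p q r) B k * Wj (sigQ p q r) B k
        = algebraMap ℝ (CliffordAlgebra (sigQ p q r)) c) := by
  exact EffPs.main (sigQ p q r) (Pi.basisFun ℝ (Fin (p + q + r))) B hB k hk
end

section
/- For any bivector B in ℝ_{p,q,r}, the product Λ^B Λ^{−B} is a real scalar (an element of grade 0); consequently |Λ^B|² := Λ^B Λ^{−B} satisfies |Λ^B|² = |Λ^{−B}|². -/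
namespace OuterExpAux

open CliffordAlgebra

section gen
variable {R : Type*} [Field R] {V : Type*} [AddCommGroup V] [Module R V]
variable {Q : QuadraticForm R V}

theorem involute_contract (d : Module.Dual R V) (x : CliffordAlgebra Q) :
    involute (contractLeft d x) = - contractLeft d (involute x) := by
  induction x using CliffordAlgebra.left_induction with
  | algebraMap r => simp
  | add x y hx hy => simp only [map_add, hx, hy, neg_add]
  | ι_mul x m hx =>
    rw [contractLeft_ι_mul, map_sub, map_mul, map_mul, hx, involute_ι, neg_mul, neg_mul, map_neg,
      contractLeft_ι_mul, map_smul]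
    noncomm_ring

theorem contract_mul (d : Module.Dual R V) (x y : CliffordAlgebra Q) :
    contractLeft d (x * y) = contractLeft d x * y + involute x * contractLeft d y := by
  induction x using CliffordAlgebra.left_induction with
  | algebraMap r => simp [contractLeft_algebraMap_mul]
  | add x z hx hy => simp only [map_add, add_mul, hx, hy]; abel
  | ι_mul x m hx =>
    rw [mul_assoc, contractLeft_ι_mul, hx, contractLeft_ι_mul, map_mul, involute_ι, sub_mul,
      mul_add, smul_mul_assoc, neg_mul, neg_mul, mul_assoc, mul_assoc]
    abel

theorem ι_mul_sub (v : V) (x : CliffordAlgebra Q) :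
    ι Q v * x - involute x * ι Q v = contractLeft (QuadraticMap.polarBilin Q v) x := by
  induction x using CliffordAlgebra.left_induction with
  | algebraMap r => simp [Algebra.commutes]
  | add x z hx hy => simp only [map_add, add_mul, mul_add, ← hx, ← hy]; abel
  | ι_mul x m hx =>
    have h := ι_mul_ι_add_swap (Q := Q) v m
    rw [contractLeft_ι_mul, ← hx, map_mul, involute_ι, mul_sub, Algebra.smul_def,
      QuadraticMap.polarBilin_apply_apply, ← h]
    noncomm_ring

variable [Invertible (2 : R)]

theorem e_one : equivExterior Q 1 = 1 := changeForm_one changeForm.associated_neg_proof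

theorem e_algebraMap (r : R) : equivExterior Q (algebraMap R _ r) = algebraMap R _ r :=
  changeForm_algebraMap changeForm.associated_neg_proof r

theorem e_ι_mul (v : V) (x : CliffordAlgebra Q) :
    equivExterior Q (ι Q v * x) = ExteriorAlgebra.ι R v * equivExterior Q x
      + contractLeft (Q := 0) (QuadraticMap.associated (R := R) Q v) (equivExterior Q x) := by
  refine (changeForm_ι_mul changeForm.associated_neg_proof v x).trans ?_
  have h : QuadraticMap.associated (R := R) (-Q) v = -QuadraticMap.associated (R := R) Q v := by
    rw [map_neg, LinearMap.neg_apply]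
  have h2 : ∀ z : ExteriorAlgebra R V,
      contractLeft (Q := 0) (QuadraticMap.associated (R := R) (-Q) v) z
      = - contractLeft (Q := 0) (QuadraticMap.associated (R := R) Q v) z := by
    intro z
    rw [h, map_neg, LinearMap.neg_apply]
  rw [h2, sub_neg_eq_add]
  rfl

theorem e_contract (d : Module.Dual R V) (x : CliffordAlgebra Q) :
    equivExterior Q (contractLeft d x) = contractLeft (Q := 0) d (equivExterior Q x) :=
  changeForm_contractLeft changeForm.associated_neg_proof d x

theorem e_involute (x : CliffordAlgebra Q) :
    equivExterior Q (involute x) = involute (Q := 0) (equivExterior Q x) := by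
  induction x using CliffordAlgebra.left_induction with
  | algebraMap r => simp
  | add x y hx hy => simp only [map_add, hx, hy]
  | ι_mul x m hx =>
    rw [map_mul, involute_ι, neg_mul, map_neg, e_ι_mul, hx, e_ι_mul, map_add, map_mul,
      involute_contract, involute_ι]
    noncomm_ring



end gen

section grading
variable {R : Type*} [Field R] {V : Type*} [AddCommGroup V] [Module R V]

theorem contract_mem (d : Module.Dual R V) {n : ℕ} {x : ExteriorAlgebra R V}
    (hx : x ∈ ⋀[R]^n V) :
    contractLeft (Q := 0) d x ∈ ⋀[R]^(n - 1) V ∧ (n = 0 → contractLeft (Q := 0) d x = 0) := by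
  induction hx using Submodule.pow_induction_on_left' with
  | algebraMap r => simp [contractLeft_algebraMap]
  | add x y i hx hy ihx ihy =>
    rw [map_add]
    exact ⟨add_mem ihx.1 ihy.1, fun h => by rw [ihx.2 h, ihy.2 h, add_zero]⟩
  | mem_mul m hm i x hx ih =>
    obtain ⟨m, rfl⟩ := hm
    refine ⟨?_, by simp⟩
    have : contractLeft (Q := 0) d (ExteriorAlgebra.ι R m * x) = d m • x
      - ExteriorAlgebra.ι R m * contractLeft (Q := 0) d x := contractLeft_ι_mul (Q := 0) d m x
    rw [this]
    simp only [Nat.succ_eq_add_one, Nat.add_sub_cancel]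
    refine sub_mem (Submodule.smul_mem _ _ hx) ?_
    rcases i with _ | i
    · rw [ih.2 rfl, mul_zero]; exact zero_mem _
    · rw [ExteriorAlgebra.exteriorPower, pow_succ']
      exact Submodule.mul_mem_mul (LinearMap.mem_range_self _ _) ih.1

/-- Elements all of whose components have grade `< n`. -/
def Low (R : Type*) [Field R] (V : Type*) [AddCommGroup V] [Module R V] (n : ℕ) :
    Submodule R (ExteriorAlgebra R V) := ⨆ m, ⨆ (_ : m < n), ⋀[R]^m V

theorem mem_low {m n : ℕ} (h : m < n) {x : ExteriorAlgebra R V} (hx : x ∈ ⋀[R]^m V) :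
    x ∈ Low R V n :=
  (le_iSup₂_of_le (f := fun m (_ : m < n) => ⋀[R]^m V) m h le_rfl) hx

theorem low_mono {m n : ℕ} (h : m ≤ n) : Low R V m ≤ Low R V n :=
  iSup₂_le fun i hi _ hx => mem_low (hi.trans_le h) hx

theorem mul_low {i n : ℕ} {a x : ExteriorAlgebra R V} (ha : a ∈ ⋀[R]^i V)
    (hx : x ∈ Low R V n) : a * x ∈ Low R V (i + n) := by
  have : Low R V n ≤ (Low R V (i + n)).comap (LinearMap.mulLeft R a) := by
    refine iSup₂_le fun m hm y hy => ?_
    refine mem_low (m := i + m) (by omega) ?_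
    rw [ExteriorAlgebra.exteriorPower, pow_add]
    exact Submodule.mul_mem_mul ha hy
  exact this hx

theorem contract_low (d : Module.Dual R V) {n : ℕ} {x : ExteriorAlgebra R V}
    (hx : x ∈ Low R V (n + 1)) : contractLeft (Q := 0) d x ∈ Low R V n := by
  have : Low R V (n + 1) ≤ (Low R V n).comap (contractLeft (Q := 0) d) := by
    refine iSup₂_le fun m hm y hy => ?_
    rcases m with _ | m
    · rw [Submodule.mem_comap, (contract_mem d hy).2 rfl]; exact zero_mem _
    · exact mem_low (m := m) (by omega) (contract_mem d hy).1
  exact this hx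

theorem decompose_low {n m : ℕ} (h : n ≤ m) {x : ExteriorAlgebra R V} (hx : x ∈ Low R V n) :
    (DirectSum.decompose (fun n : ℕ => ⋀[R]^n V) x m : ExteriorAlgebra R V) = 0 := by
  have : Low R V n ≤ LinearMap.ker (GradedAlgebra.proj (fun n : ℕ => ⋀[R]^n V) m) := by
    refine iSup₂_le fun i hi y hy => ?_
    rw [LinearMap.mem_ker, GradedAlgebra.proj_apply,
      DirectSum.decompose_of_mem_ne (fun n : ℕ => ⋀[R]^n V) hy (by omega)]
  exact this hx

theorem ι_mem (v : V) : ExteriorAlgebra.ι R v ∈ ⋀[R]^1 V := by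
  rw [ExteriorAlgebra.exteriorPower, pow_one]; exact LinearMap.mem_range_self _ _

theorem pow_mem_two {b : ExteriorAlgebra R V} (hb : b ∈ ⋀[R]^2 V) (j : ℕ) :
    b ^ j ∈ ⋀[R]^(2 * j) V := by
  rw [ExteriorAlgebra.exteriorPower, pow_mul]; exact Submodule.pow_mem_pow _ hb j

theorem two_induction {P : ExteriorAlgebra R V → Prop} {b : ExteriorAlgebra R V}
    (hb : b ∈ ⋀[R]^2 V) 
    (hm : ∀ u v, P (ExteriorAlgebra.ι R u * ExteriorAlgebra.ι R v))
    (ha : ∀ x y, P x → P y → P (x + y)) : P b := by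
  rw [ExteriorAlgebra.exteriorPower, pow_two] at hb
  refine Submodule.mul_induction_on hb ?_ ha
  rintro _ ⟨u, rfl⟩ _ ⟨v, rfl⟩
  exact hm u v

variable [Invertible (2 : R)] (Q : QuadraticForm R V)

theorem top_mul {b : ExteriorAlgebra R V} (hb : b ∈ ⋀[R]^2 V) {n : ℕ} (y : CliffordAlgebra Q)
    (hy : equivExterior Q y ∈ Low R V (n + 1)) :
    equivExterior Q ((equivExterior Q).symm b * y) - b * equivExterior Q y ∈ Low R V (n + 2) := by
  refine two_induction (P := fun b => equivExterior Q ((equivExterior Q).symm b * y)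
    - b * equivExterior Q y ∈ Low R V (n + 2)) hb ?_ ?_
  · intro u v
    have h1 : (equivExterior Q).symm (ExteriorAlgebra.ι R u * ExteriorAlgebra.ι R v)
        = ι Q u * ι Q v - algebraMap R _ (QuadraticMap.associated (R := R) Q u v) := by
      rw [LinearEquiv.symm_apply_eq, map_sub, e_ι_mul, e_algebraMap]
      have h2 : equivExterior Q (ι Q v) = ExteriorAlgebra.ι R v :=
        changeForm_ι changeForm.associated_neg_proof v
      have h3 : contractLeft (Q := 0) (QuadraticMap.associated (R := R) Q u)
        (ExteriorAlgebra.ι R v) = algebraMap R _ (QuadraticMap.associated (R := R) Q u v) :=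
        contractLeft_ι 0 _ _
      rw [h2, h3, add_sub_cancel_right]
    rw [h1, sub_mul, map_sub, mul_assoc, e_ι_mul, e_ι_mul, ← Algebra.smul_def, map_smul]
    set z := equivExterior Q y
    have h4 : ∀ a c : ExteriorAlgebra R V, ExteriorAlgebra.ι R u * (ExteriorAlgebra.ι R v * z + a)
        + c - QuadraticMap.associated (R := R) Q u v • z
        - ExteriorAlgebra.ι R u * ExteriorAlgebra.ι R v * z = ExteriorAlgebra.ι R u * a
        + c - QuadraticMap.associated (R := R) Q u v • z := by
      intro a c; rw [mul_add, mul_assoc]; abel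
    rw [h4]
    refine sub_mem (add_mem ?_ ?_) (Submodule.smul_mem _ _ (low_mono (by omega) hy))
    · exact low_mono (by omega) (mul_low (ι_mem u) (contract_low _ hy))
    · refine contract_low _ (low_mono (m := n + 2) (by omega) (add_mem ?_ ?_))
      · exact low_mono (by omega) (mul_low (ι_mem v) hy)
      · exact low_mono (by omega) (contract_low _ hy)
  · intro x z hx hz
    rw [map_add, add_mul, add_mul, map_add, add_sub_add_comm]
    exact add_mem hx hz

theorem top_pow {b : ExteriorAlgebra R V} (hb : b ∈ ⋀[R]^2 V) (j : ℕ) :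
    equivExterior Q ((equivExterior Q).symm b ^ j) - b ^ j ∈ Low R V (2 * j) := by
  induction j with
  | zero => rw [pow_zero, pow_zero, e_one, sub_self]; exact zero_mem _
  | succ j ih =>
    set B := (equivExterior Q).symm b
    have h1 : equivExterior Q (B ^ j) ∈ Low R V (2 * j + 1) := by
      rw [← sub_add_cancel (equivExterior Q (B ^ j)) (b ^ j)]
      exact add_mem (low_mono (by omega) ih) (mem_low (by omega) (pow_mem_two hb j))
    have h2 := top_mul Q hb (B ^ j) h1
    have h3 := mul_low hb ih
    rw [pow_succ', pow_succ']
    have h4 := add_mem h2 (low_mono (show 2 + 2 * j ≤ 2 * j + 2 by omega) h3)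
    rw [mul_sub, sub_add_sub_cancel] at h4
    exact h4

end grading

theorem Wj_eq {M : Type*} [AddCommGroup M] [Module ℝ M] [inst : Invertible (2 : ℝ)]
    (Q : QuadraticForm ℝ M) {b : ExteriorAlgebra ℝ M} (hb : b ∈ ⋀[ℝ]^2 M) (j : ℕ) :
    Wj Q ((equivExterior Q).symm b) j
      = (equivExterior Q).symm ((j.factorial : ℝ)⁻¹ • b ^ j) := by
  rw [Wj, gradeProj, map_smul]
  congr 1
  have : inst = invertibleOfNonzero two_ne_zero := Subsingleton.elim _ _
  subst this
  congr 1
  have h1 := decompose_low (le_refl _) (top_pow Q hb j)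
  rw [DirectSum.decompose_sub, DirectSum.sub_apply, AddSubgroupClass.coe_sub, sub_eq_zero,
    DirectSum.decompose_of_mem_same (fun n : ℕ => ⋀[ℝ]^n M) (pow_mem_two hb j)] at h1
  exact h1

theorem grade_two {M : Type*} [AddCommGroup M] [Module ℝ M] [inst : Invertible (2 : ℝ)]
    (Q : QuadraticForm ℝ M) {B : CliffordAlgebra Q} (hB : IsGrade Q 2 B) :
    equivExterior Q B ∈ ⋀[ℝ]^2 M := by
  rw [IsGrade, gradeProj] at hB
  have : inst = invertibleOfNonzero two_ne_zero := Subsingleton.elim _ _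
  subst this
  rw [← hB, LinearEquiv.apply_symm_apply]
  exact SetLike.coe_mem _

section main
variable {V : Type*} [AddCommGroup V] [Module ℝ V] [FiniteDimensional ℝ V]

theorem euler {n : ℕ} {x : ExteriorAlgebra ℝ V} (hx : x ∈ ⋀[ℝ]^n V) :
    ∑ i, ExteriorAlgebra.ι ℝ (Module.finBasis ℝ V i) *
      contractLeft (Q := 0) ((Module.finBasis ℝ V).coord i) x = (n : ℝ) • x := by
  induction hx using Submodule.pow_induction_on_left' with
  | algebraMap r => simp [contractLeft_algebraMap]
  | add x y i hx hy ihx ihy =>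
    simp only [map_add, mul_add, Finset.sum_add_distrib, ihx, ihy, smul_add]
  | mem_mul m hm i x hx ih =>
    obtain ⟨m, rfl⟩ := hm
    have h : ∀ d, contractLeft (Q := 0) d (ExteriorAlgebra.ι ℝ m * x) = d m • x
      - ExteriorAlgebra.ι ℝ m * contractLeft (Q := 0) d x :=
      fun d => contractLeft_ι_mul (Q := 0) d m x
    have h2 : ∀ (u : V) (z : ExteriorAlgebra ℝ V),
        ExteriorAlgebra.ι ℝ u * (ExteriorAlgebra.ι ℝ m * z)
        = - (ExteriorAlgebra.ι ℝ m * (ExteriorAlgebra.ι ℝ u * z)) := by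
      intro u z
      rw [← mul_assoc, ← mul_assoc, eq_neg_of_add_eq_zero_left (ExteriorAlgebra.ι_add_mul_swap u m),
        neg_mul]
    simp only [h, mul_sub, h2, sub_neg_eq_add, Finset.sum_add_distrib, ← Finset.mul_sum, ih]
    have h3 : ∑ i, ExteriorAlgebra.ι ℝ (Module.finBasis ℝ V i) *
        ((Module.finBasis ℝ V).coord i m • x) = ExteriorAlgebra.ι ℝ m * x := by
      conv_rhs => rw [← (Module.finBasis ℝ V).sum_repr m, map_sum, Finset.sum_mul]
      simp
    rw [h3]
    push_cast
    rw [add_smul, one_smul, mul_smul_comm, add_comm]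

theorem scalar_of_contract {x : ExteriorAlgebra ℝ V}
    (h : ∀ d, contractLeft (Q := 0) d x = 0) : ∃ c : ℝ, x = algebraMap ℝ _ c := by
  have key : ∀ (x : ExteriorAlgebra ℝ V) (n : ℕ),
      (DirectSum.decompose (fun n : ℕ => ⋀[ℝ]^n V)
      (∑ i, ExteriorAlgebra.ι ℝ (Module.finBasis ℝ V i) *
      contractLeft (Q := 0) ((Module.finBasis ℝ V).coord i) x) n : ExteriorAlgebra ℝ V)
      = (n : ℝ) • (DirectSum.decompose (fun n : ℕ => ⋀[ℝ]^n V) x n : ExteriorAlgebra ℝ V) := by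
    intro x n
    induction x using DirectSum.Decomposition.inductionOn (fun n : ℕ => ⋀[ℝ]^n V) with
    | zero => simp
    | @homogeneous i m =>
      rw [euler m.2, DirectSum.decompose_smul, DirectSum.smul_apply, Submodule.coe_smul]
      by_cases hi : i = n
      · subst hi; rfl
      · rw [DirectSum.decompose_of_mem_ne (fun n : ℕ => ⋀[ℝ]^n V) m.2 hi, smul_zero, smul_zero]
    | add x y hx hy =>
      simp only [map_add, mul_add, Finset.sum_add_distrib, DirectSum.decompose_add,
        DirectSum.add_apply, Submodule.coe_add, smul_add] at hx hy ⊢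
      rw [hx, hy]
  have hz : ∀ n : ℕ, n ≠ 0 → 
      (DirectSum.decompose (fun n : ℕ => ⋀[ℝ]^n V) x n : ExteriorAlgebra ℝ V) = 0 := by
    intro n hn
    have := key x n
    simp only [h, mul_zero, Finset.sum_const_zero, DirectSum.decompose_zero,
      DirectSum.zero_apply, ZeroMemClass.coe_zero] at this
    exact (smul_eq_zero.1 this.symm).resolve_left (by exact_mod_cast hn)
  have hx : x ∈ (1 : Submodule ℝ (ExteriorAlgebra ℝ V)) := by
    classical
    rw [← DirectSum.sum_support_decompose (fun n : ℕ => ⋀[ℝ]^n V) x]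
    refine Submodule.sum_mem _ fun i _ => ?_
    by_cases hi : i = 0
    · subst hi
      have := (DirectSum.decompose (fun n : ℕ => ⋀[ℝ]^n V) x 0).2
      simpa only [ExteriorAlgebra.exteriorPower, pow_zero] using this
    · rw [hz i hi]; exact zero_mem _
  obtain ⟨c, hc⟩ := Submodule.mem_one.1 hx
  exact ⟨c, hc.symm⟩

theorem top_zero {m : ℕ} (hm : Module.finrank ℝ V < m) {x : ExteriorAlgebra ℝ V}
    (hx : x ∈ ⋀[ℝ]^m V) : x = 0 := by
  have h : Module.finrank ℝ (⋀[ℝ]^m V) = 0 := by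
    rw [exteriorPower.finrank_eq, Nat.choose_eq_zero_of_lt hm]
  have := Module.finrank_zero_iff.1 h
  exact congrArg Subtype.val (Subsingleton.elim (⟨x, hx⟩ : ⋀[ℝ]^m V) 0)

variable {b : ExteriorAlgebra ℝ V}

theorem involute_b (hb : b ∈ ⋀[ℝ]^2 V) : involute (Q := 0) b = b := by
  refine two_induction (P := fun b => involute (Q := 0) b = b) hb ?_ ?_
  · intro u v
    rw [map_mul, involute_ι, involute_ι, neg_mul_neg]
  · intro x y hx hy
    rw [map_add, hx, hy]

theorem comm_b (hb : b ∈ ⋀[ℝ]^2 V) (v : V) : 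
    ExteriorAlgebra.ι ℝ v * b = b * ExteriorAlgebra.ι ℝ v := by
  have h := ι_mul_sub (Q := (0 : QuadraticForm ℝ V)) v b
  rw [involute_b hb] at h
  have h0 : QuadraticMap.polarBilin (0 : QuadraticForm ℝ V) v = 0 := by
    ext w; simp [QuadraticMap.polar]
  rw [h0, map_zero, LinearMap.zero_apply, sub_eq_zero] at h
  exact h

theorem contract_pow (hb : b ∈ ⋀[ℝ]^2 V) (d : Module.Dual ℝ V) (u : V)
    (hu : contractLeft (Q := 0) d b = ExteriorAlgebra.ι ℝ u) (j : ℕ) :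
    contractLeft (Q := 0) d (b ^ (j + 1)) = ((j : ℝ) + 1) • (ExteriorAlgebra.ι ℝ u * b ^ j) := by
  induction j with
  | zero => simp [hu]
  | succ j ih =>
    have h := contract_mul (Q := (0 : QuadraticForm ℝ V)) d b (b ^ (j + 1))
    rw [hu, ih, involute_b hb] at h
    rw [pow_succ' b (j + 1)]
    refine h.trans ?_
    rw [mul_smul_comm, ← mul_assoc, ← comm_b hb, mul_assoc, ← pow_succ']
    push_cast
    module

/-- Truncated exterior exponential. -/
noncomputable def S (b : ExteriorAlgebra ℝ V) (n : ℕ) (t : ℝ) : ExteriorAlgebra ℝ V :=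
  ∑ j ∈ Finset.range (n + 1), t ^ j • ((j.factorial : ℝ)⁻¹ • b ^ j)

theorem contract_S (hb : b ∈ ⋀[ℝ]^2 V) (d : Module.Dual ℝ V) (u : V)
    (hu : contractLeft (Q := 0) d b = ExteriorAlgebra.ι ℝ u) (n : ℕ)
    (hn : Module.finrank ℝ V ≤ n) (t : ℝ) :
    contractLeft (Q := 0) d (S b n t) = t • (ExteriorAlgebra.ι ℝ u * S b n t) := by
  have hz : ExteriorAlgebra.ι ℝ u * b ^ n = 0 := by
    refine top_zero (m := 1 + 2 * n) (by omega) ?_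
    rw [ExteriorAlgebra.exteriorPower, pow_add]
    exact Submodule.mul_mem_mul (ι_mem u) (pow_mem_two hb n)
  have h1 : contractLeft (Q := 0) d (S b n t) = ∑ j ∈ Finset.range (n + 1),
      t ^ j • ((j.factorial : ℝ)⁻¹ • contractLeft (Q := 0) d (b ^ j)) := by
    rw [S, map_sum]
    simp only [map_smul]
  have h2 : contractLeft (Q := 0) d (b ^ 0) = 0 := by
    rw [pow_zero]; exact contractLeft_one 0 d
  rw [h1, Finset.sum_range_succ', h2, smul_zero, smul_zero, add_zero, S, Finset.sum_range_succ,
    mul_add, mul_smul_comm, mul_smul_comm, hz, smul_zero, smul_zero, add_zero, Finset.mul_sum,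
    Finset.smul_sum]
  refine Finset.sum_congr rfl fun j _ => ?_
  rw [contract_pow hb d u hu, mul_smul_comm, mul_smul_comm, smul_smul, smul_smul, smul_smul,
    smul_smul]
  congr 1
  have : (j.factorial : ℝ) ≠ 0 := by exact_mod_cast j.factorial_ne_zero
  have h' : (j : ℝ) + 1 ≠ 0 := by positivity
  rw [Nat.factorial_succ]
  push_cast
  field_simp
  ring

/-- The vector part of the contraction of a bivector. -/
noncomputable def β (b : ExteriorAlgebra ℝ V) : Module.Dual ℝ V →ₗ[ℝ] V :=
  ExteriorAlgebra.ιInv ∘ₗ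
    ((contractLeft (R := ℝ) (M := V) (Q := 0)).flip b :
      Module.Dual ℝ V →ₗ[ℝ] ExteriorAlgebra ℝ V)

theorem β_spec (hb : b ∈ ⋀[ℝ]^2 V) (d : Module.Dual ℝ V) :
    contractLeft (Q := 0) d b = ExteriorAlgebra.ι ℝ (β b d) := by
  have h := (contract_mem d hb).1
  simp only [ExteriorAlgebra.exteriorPower, Nat.add_one_sub_one, pow_one] at h
  obtain ⟨u, hu⟩ := h
  have : β b d = u := by
    change ExteriorAlgebra.ιInv (contractLeft (Q := 0) d b) = u
    rw [← hu, ExteriorAlgebra.ι_leftInverse]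
  rw [this, hu]

theorem involute_S (hb : b ∈ ⋀[ℝ]^2 V) (n : ℕ) (t : ℝ) :
    involute (Q := 0) (S b n t) = S b n t := by
  rw [S, map_sum]
  refine Finset.sum_congr rfl fun j _ => ?_
  rw [map_smul, map_smul]
  congr 2
  exact (map_pow _ _ _).trans (by rw [involute_b hb])

variable [Invertible (2 : ℝ)] (Q : QuadraticForm ℝ V)

theorem contract_prod (hb : b ∈ ⋀[ℝ]^2 V) (n : ℕ) (hn : Module.finrank ℝ V ≤ n) (t : ℝ)
    (d : Module.Dual ℝ V) (w : V)
    (hw : w - t • β b (QuadraticMap.associated (R := ℝ) Q w) = t • β b d) :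
    contractLeft d ((equivExterior Q).symm (S b n t) * (equivExterior Q).symm (S b n (-t)))
      = 0 := by
  have hc : ∀ (d : Module.Dual ℝ V) (t : ℝ), contractLeft (Q := 0) d (S b n t)
      = t • (ExteriorAlgebra.ι ℝ (β b d) * S b n t) :=
    fun d t => contract_S hb d _ (β_spec hb d) n hn t
  have hinv : involute ((equivExterior Q).symm (S b n t)) = (equivExterior Q).symm (S b n t) := by
    rw [LinearEquiv.eq_symm_apply, e_involute, LinearEquiv.apply_symm_apply, involute_S hb]
  have hp : QuadraticMap.polarBilin Q w = (2 : ℝ) • QuadraticMap.associated (R := ℝ) Q w := by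
    ext z; simp [QuadraticMap.associated_apply, QuadraticMap.polar]
  have hw' : ExteriorAlgebra.ι ℝ w - t • ExteriorAlgebra.ι ℝ
      (β b (QuadraticMap.associated (R := ℝ) Q w)) = t • ExteriorAlgebra.ι ℝ (β b d) := by
    rw [← map_smul (ExteriorAlgebra.ι ℝ), ← map_smul (ExteriorAlgebra.ι ℝ), ← map_sub, hw]
  have h1 : contractLeft d ((equivExterior Q).symm (S b n t))
      = (equivExterior Q).symm (S b n t) * ι Q w := by
    have h := ι_mul_sub w ((equivExterior Q).symm (S b n t))
    rw [hinv, sub_eq_iff_eq_add', ← sub_eq_iff_eq_add] at h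
    rw [← h]
    apply (equivExterior Q).injective
    rw [map_sub, e_contract, e_contract, e_ι_mul, LinearEquiv.apply_symm_apply, hp, map_smul,
      LinearMap.smul_apply, hc, hc, ← smul_mul_assoc, ← hw', sub_mul, smul_mul_assoc]
    module
  have h2 : contractLeft d ((equivExterior Q).symm (S b n (-t)))
      = - (ι Q w * (equivExterior Q).symm (S b n (-t))) := by
    apply (equivExterior Q).injective
    rw [map_neg, e_contract, e_ι_mul, LinearEquiv.apply_symm_apply, hc, hc, neg_smul, 
      ← smul_mul_assoc, ← hw', sub_mul, smul_mul_assoc]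
    module
  rw [contract_mul, hinv, h1, h2]
  noncomm_ring

theorem finite_bad (L : Module.End ℝ V) :
    {t : ℝ | ¬ Function.Surjective (fun w => w - t • L w)}.Finite := by
  have hf := Module.End.finite_hasEigenvalue L
  refine (hf.preimage (inv_injective.injOn)).subset ?_
  intro t ht
  simp only [Set.mem_setOf_eq] at ht
  have h1 : ¬ Function.Injective (LinearMap.id - t • L : Module.End ℝ V) := fun h => 
    ht (LinearMap.injective_iff_surjective.1 h)
  rw [← LinearMap.ker_eq_bot, Submodule.eq_bot_iff] at h1
  push Not at h1
  obtain ⟨w, hw, hw0⟩ := h1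
  rw [LinearMap.mem_ker, LinearMap.sub_apply, sub_eq_zero, LinearMap.id_apply,
    LinearMap.smul_apply] at hw
  have ht0 : t ≠ 0 := by rintro rfl; exact hw0 (by rw [hw, zero_smul])
  refine Module.End.hasEigenvalue_of_hasEigenvector (x := w) ⟨?_, hw0⟩
  rw [Module.End.mem_eigenspace_iff]
  conv_rhs => rw [hw]
  rw [smul_smul, inv_mul_cancel₀ ht0, one_smul]

theorem poly_vanish {W : Type*} [AddCommGroup W] [Module ℝ W] (n : ℕ) (Y : ℕ → ℕ → W)
    (h : {t : ℝ | ∑ i ∈ Finset.range n, ∑ j ∈ Finset.range n,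
      (t ^ i * (-t) ^ j) • Y i j ≠ 0}.Finite) (t : ℝ) :
    ∑ i ∈ Finset.range n, ∑ j ∈ Finset.range n, (t ^ i * (-t) ^ j) • Y i j = 0 := by
  rw [← Module.forall_dual_apply_eq_zero_iff ℝ]
  intro φ
  let P : Polynomial ℝ := ∑ i ∈ Finset.range n, ∑ j ∈ Finset.range n,
    Polynomial.C (φ (Y i j)) * (Polynomial.X ^ i * (-Polynomial.X) ^ j)
  have hP : ∀ s : ℝ, P.eval s = φ (∑ i ∈ Finset.range n, ∑ j ∈ Finset.range n,
      (s ^ i * (-s) ^ j) • Y i j) := by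
    intro s
    simp [P, Polynomial.eval_finset_sum, mul_comm]
  have h0 : P = 0 := by
    refine Polynomial.eq_zero_of_infinite_isRoot P (h.infinite_compl.mono ?_)
    intro s hs
    simp only [Set.mem_compl_iff, Set.mem_setOf_eq, not_not] at hs
    simp only [Set.mem_setOf_eq, Polynomial.IsRoot, hP, hs, map_zero]
  rw [← hP, h0, Polynomial.eval_zero]

theorem prod_scalar (hb : b ∈ ⋀[ℝ]^2 V) (n : ℕ) (hn : Module.finrank ℝ V ≤ n) (t : ℝ) :
    ∃ c : ℝ, (equivExterior Q).symm (S b n t) * (equivExterior Q).symm (S b n (-t))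
      = algebraMap ℝ _ c := by
  have hall : ∀ d : Module.Dual ℝ V, contractLeft d
      ((equivExterior Q).symm (S b n t) * (equivExterior Q).symm (S b n (-t))) = 0 := by
    intro d
    let Y : ℕ → ℕ → CliffordAlgebra Q := fun i j => contractLeft d
      ((equivExterior Q).symm ((i.factorial : ℝ)⁻¹ • b ^ i) *
      (equivExterior Q).symm ((j.factorial : ℝ)⁻¹ • b ^ j))
    have hY : ∀ t : ℝ, contractLeft d
        ((equivExterior Q).symm (S b n t) * (equivExterior Q).symm (S b n (-t)))
        = ∑ i ∈ Finset.range (n + 1), ∑ j ∈ Finset.range (n + 1),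
          (t ^ i * (-t) ^ j) • Y i j := by
      intro t
      rw [S, S, map_sum, map_sum, Finset.sum_mul_sum, map_sum]
      refine Finset.sum_congr rfl fun i _ => ?_
      rw [map_sum]
      refine Finset.sum_congr rfl fun j _ => ?_
      rw [LinearEquiv.map_smul _ (t ^ i), LinearEquiv.map_smul _ ((-t) ^ j), smul_mul_smul_comm,
        map_smul]
    rw [hY]
    refine poly_vanish _ _ ?_ t
    refine (finite_bad (β b ∘ₗ QuadraticMap.associated (R := ℝ) Q)).subset ?_
    intro s hs hsurj
    obtain ⟨w, hw⟩ := hsurj (s • β b d)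
    exact hs ((hY s).symm.trans (contract_prod Q hb n hn s d w hw))
  obtain ⟨c, hc⟩ := scalar_of_contract (x := equivExterior Q
    ((equivExterior Q).symm (S b n t) * (equivExterior Q).symm (S b n (-t))))
    (fun d => by rw [← e_contract, hall d, map_zero])
  refine ⟨c, (equivExterior Q).injective ?_⟩
  rw [hc, e_algebraMap]

theorem outerExp_eq (hb : b ∈ ⋀[ℝ]^2 V) (n : ℕ) (t : ℝ) :
    outerExp Q n (t • (equivExterior Q).symm b) = (equivExterior Q).symm (S b n t) := by
  rw [outerExp, S, map_sum]
  refine Finset.sum_congr rfl fun j _ => ?_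
  rw [← map_smul, Wj_eq Q (Submodule.smul_mem _ _ hb), smul_pow, smul_comm]

end main

end OuterExpAux

/-- for any bivector `B`, the product `Λ^B Λ^{-B}` is a real scalar;
consequently `|Λ^B|² := Λ^B Λ^{-B}` satisfies `|Λ^B|² = |Λ^{-B}|²` (i.e. it equals
`Λ^{-B} Λ^{B}`). -/
theorem outerExp_mul_outerExp_neg_isScalar (p q r : ℕ) (B : CliffordAlgebra (sigQ p q r))
    (hB : IsGrade (sigQ p q r) 2 B) :
    (∃ c : ℝ, outerExp (sigQ p q r) (p + q + r) B * outerExp (sigQ p q r) (p + q + r) (-B)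
        = algebraMap ℝ (CliffordAlgebra (sigQ p q r)) c) ∧
    outerExp (sigQ p q r) (p + q + r) B * outerExp (sigQ p q r) (p + q + r) (-B)
      = outerExp (sigQ p q r) (p + q + r) (-B) * outerExp (sigQ p q r) (p + q + r) B := by
  haveI : Invertible (2 : ℝ) := invertibleOfNonzero two_ne_zero
  have hb := OuterExpAux.grade_two _ hB
  have hn : Module.finrank ℝ (Fin (p + q + r) → ℝ) ≤ p + q + r := by simp
  have h1 := OuterExpAux.outerExp_eq (sigQ p q r) hb (p + q + r) 1
  have h2 := OuterExpAux.outerExp_eq (sigQ p q r) hb (p + q + r) (-1)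
  rw [LinearEquiv.symm_apply_apply, one_smul] at h1
  rw [LinearEquiv.symm_apply_apply, neg_smul, one_smul] at h2
  obtain ⟨c, hc⟩ := OuterExpAux.prod_scalar (sigQ p q r) hb (p + q + r) hn 1
  obtain ⟨c', hc'⟩ := OuterExpAux.prod_scalar (sigQ p q r) hb (p + q + r) hn (-1)
  rw [neg_neg, ← h1, ← h2] at hc'
  rw [← h1, ← h2] at hc
  refine ⟨⟨c, hc⟩, ?_⟩
  by_cases h0 : outerExp (sigQ p q r) (p + q + r) B = 0
  · rw [h0, zero_mul, mul_zero]
  · have h3 : c • outerExp (sigQ p q r) (p + q + r) B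
        = c' • outerExp (sigQ p q r) (p + q + r) B := by
      rw [Algebra.smul_def, Algebra.smul_def, ← hc, Algebra.commutes c', ← hc', mul_assoc]
    rw [hc, hc', smul_left_injective ℝ h0 h3]
end

section
/- Let B be a bivector in ℝ_{p,q,r} with effective dimension 2k, and let ±μ₁, …, ±μ_k ∈ ℂ be the roots (with multiplicity) of its characteristic polynomial P_{2k}. Then for every index 1 ≤ j ≤ k one has ⟨W_j²⟩₀ = e_j(μ₁², …, μ_k²), where e_j denotes the elementary symmetric polynomial of degree j in k variables. -/
noncomputable section

open CliffordAlgebra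

set_option linter.all false

namespace WjProof

section general

variable {K : Type*} [Field K] {M : Type*} [AddCommGroup M] [Module K M]

lemma involute_contract {Q : QuadraticForm K M} (d : Module.Dual K M) (x : CliffordAlgebra Q) :
    involute (contractLeft d x) = - contractLeft d (involute x) := by
  induction x using CliffordAlgebra.left_induction with
  | algebraMap r => simp
  | add x y hx hy => simp only [map_add, hx, hy, neg_add]
  | ι_mul x m hx =>
    simp only [contractLeft_ι_mul, map_sub, map_smul, map_mul, involute_ι, hx, neg_mul, map_neg]
    simp [contractLeft_ι_mul]

lemma ext_ind {P : ExteriorAlgebra K M → Prop} (n : ℕ)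
    (hι : ∀ v, ∀ Z ∈ ⋀[K]^n M, P (ExteriorAlgebra.ι K v * Z))
    (hadd : ∀ x y, P x → P y → P (x + y)) : ∀ Z ∈ ⋀[K]^(n+1) M, P Z := by
  intro Z hZ
  rw [ExteriorAlgebra.exteriorPower, pow_succ'] at hZ
  refine Submodule.mul_induction_on hZ ?_ hadd
  rintro _ ⟨v, rfl⟩ n hn
  exact hι v n hn

lemma ι_mul_mem (v : M) {n : ℕ} {Z : ExteriorAlgebra K M} (hZ : Z ∈ ⋀[K]^n M) :
    ExteriorAlgebra.ι K v * Z ∈ ⋀[K]^(n+1) M := by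
  rw [ExteriorAlgebra.exteriorPower, pow_succ']
  exact Submodule.mul_mem_mul ⟨v, rfl⟩ hZ

lemma mem_zero {Z : ExteriorAlgebra K M} (hZ : Z ∈ ⋀[K]^0 M) :
    ∃ c : K, Z = algebraMap K _ c := by
  rw [ExteriorAlgebra.exteriorPower, pow_zero] at hZ
  obtain ⟨c, hc⟩ := Submodule.mem_one.mp hZ
  exact ⟨c, hc.symm⟩

lemma contract_zero (d : Module.Dual K M) {Z : ExteriorAlgebra K M} (hZ : Z ∈ ⋀[K]^0 M) :
    contractLeft (Q := (0 : QuadraticForm K M)) d Z = 0 := by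
  obtain ⟨c, rfl⟩ := mem_zero hZ
  exact contractLeft_algebraMap _ _ _

lemma contract_mem (d : Module.Dual K M) (n : ℕ) : ∀ Z ∈ ⋀[K]^(n+1) M,
    contractLeft (Q := (0 : QuadraticForm K M)) d Z ∈ ⋀[K]^n M := by
  induction n with
  | zero =>
    refine ext_ind 0 ?_ ?_
    · intro v Z hZ
      have h := contractLeft_ι_mul (Q := (0 : QuadraticForm K M)) d v Z
      rw [contract_zero d hZ, mul_zero, sub_zero] at h
      have h2 : d v • Z ∈ ⋀[K]^0 M := Submodule.smul_mem _ _ hZ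
      rw [← h] at h2
      exact h2
    · intro x y hx hy
      rw [map_add]
      exact Submodule.add_mem _ hx hy
  | succ n ih =>
    refine ext_ind (n+1) ?_ ?_
    · intro v Z hZ
      have h := contractLeft_ι_mul (Q := (0 : QuadraticForm K M)) d v Z
      have h2 : d v • Z - ExteriorAlgebra.ι K v *
        contractLeft (Q := (0 : QuadraticForm K M)) d Z ∈ ⋀[K]^(n+1) M :=
        Submodule.sub_mem _ (Submodule.smul_mem _ _ hZ) (ι_mul_mem v (ih Z hZ))
      have h3 := h2
      erw [← h] at h3
      exact h3
    · intro x y hx hy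
      rw [map_add]
      exact Submodule.add_mem _ hx hy

lemma involute_mem (n : ℕ) : ∀ Z ∈ ⋀[K]^n M,
    involute (Q := (0 : QuadraticForm K M)) Z = (-1 : K)^n • Z := by
  induction n with
  | zero =>
    intro Z hZ
    obtain ⟨c, rfl⟩ := mem_zero hZ
    rw [pow_zero, one_smul]
    exact AlgHom.commutes _ _
  | succ n ih =>
    refine ext_ind n ?_ ?_
    · intro v Z hZ
      rw [map_mul, ih Z hZ]
      erw [involute_ι]
      rw [pow_succ, mul_neg_one, neg_smul, mul_smul_comm, neg_mul, smul_neg]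
    · intro x y hx hy
      rw [map_add, hx, hy, smul_add]

variable [Invertible (2 : K)] (Q : QuadraticForm K M)

/-- The bilinear form used in `equivExterior`. -/
def bb : LinearMap.BilinForm K M := QuadraticMap.associated (R := K) (-Q)

lemma bb_symm (u v : M) : bb Q u v = bb Q v u :=
  QuadraticMap.associated_isSymm K (-Q) u v

/-- Left contraction on the exterior algebra by a vector. -/
def con (v : M) : ExteriorAlgebra K M →ₗ[K] ExteriorAlgebra K M :=
  contractLeft (Q := (0 : QuadraticForm K M)) (bb Q v)

/-- Involution on the exterior algebra. -/
def inv : ExteriorAlgebra K M →ₐ[K] ExteriorAlgebra K M :=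
  involute (Q := (0 : QuadraticForm K M))

lemma con_ι_mul (v u : M) (Z : ExteriorAlgebra K M) :
    con Q v (ExteriorAlgebra.ι K u * Z) = bb Q v u • Z - ExteriorAlgebra.ι K u * con Q v Z :=
  contractLeft_ι_mul (Q := (0 : QuadraticForm K M)) (bb Q v) u Z

lemma con_comm (v u : M) (Z : ExteriorAlgebra K M) :
    con Q v (con Q u Z) = - con Q u (con Q v Z) :=
  contractLeft_comm (Q := (0 : QuadraticForm K M)) (bb Q v) (d' := bb Q u) Z

lemma inv_con (v : M) (Z : ExteriorAlgebra K M) :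
    inv (con Q v Z) = - con Q v (inv Z) := involute_contract _ _

lemma inv_ι (v : M) : inv (ExteriorAlgebra.ι K v) = - ExteriorAlgebra.ι K v :=
  involute_ι (Q := (0 : QuadraticForm K M)) v

lemma E_ι_mul (v : M) (x : CliffordAlgebra Q) :
    equivExterior Q (ι Q v * x) =
      ExteriorAlgebra.ι K v * equivExterior Q x - con Q v (equivExterior Q x) :=
  changeForm_ι_mul changeForm.associated_neg_proof v x

lemma E_algebraMap (c : K) : equivExterior Q (algebraMap K _ c) = algebraMap K _ c :=
  changeForm_algebraMap changeForm.associated_neg_proof c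

lemma E_mul_ι (v : M) (x : CliffordAlgebra Q) :
    equivExterior Q (x * ι Q v) =
      ExteriorAlgebra.ι K v * inv (equivExterior Q x) + con Q v (inv (equivExterior Q x)) := by
  induction x using CliffordAlgebra.left_induction with
  | algebraMap r =>
    rw [E_algebraMap, ← Algebra.smul_def, map_smul]
    have h1 : con Q v (algebraMap K _ r) = 0 := contractLeft_algebraMap _ _ _
    have h2 : equivExterior Q (ι Q v) = ExteriorAlgebra.ι K v :=
      changeForm_ι changeForm.associated_neg_proof v
    rw [AlgHom.commutes, h1, h2, ← Algebra.commutes, add_zero, Algebra.smul_def]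
  | add x y hx hy => simp only [add_mul, map_add, hx, hy, mul_add]; abel
  | ι_mul x u hx =>
    rw [mul_assoc, E_ι_mul, hx, E_ι_mul, map_sub, map_mul, inv_ι, inv_con]
    generalize inv (equivExterior Q x) = I
    have hanti : ExteriorAlgebra.ι K u * (ExteriorAlgebra.ι K v * I) =
        - (ExteriorAlgebra.ι K v * (ExteriorAlgebra.ι K u * I)) := by
      rw [← mul_assoc, ← mul_assoc, ← neg_mul, eq_neg_of_add_eq_zero_left
        (ExteriorAlgebra.ι_add_mul_swap u v)]
    simp only [map_add, map_sub, map_neg, neg_mul, con_ι_mul, mul_add, mul_sub, mul_neg, hanti,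
      con_comm Q v u I, bb_symm Q v u]
    abel

lemma psi_ι_mul (v : M) (Z : ExteriorAlgebra K M) :
    (equivExterior Q).symm (ExteriorAlgebra.ι K v * Z) =
      ι Q v * (equivExterior Q).symm Z + (equivExterior Q).symm (con Q v Z) := by
  apply (equivExterior Q).injective
  rw [map_add, E_ι_mul]
  simp only [LinearEquiv.apply_symm_apply, sub_add_cancel]

lemma psi_mul_ι (v : M) (Z : ExteriorAlgebra K M) :
    (equivExterior Q).symm Z * ι Q v =
      (equivExterior Q).symm (ExteriorAlgebra.ι K v * inv Z + con Q v (inv Z)) := by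
  apply (equivExterior Q).injective
  rw [E_mul_ι]
  simp only [LinearEquiv.apply_symm_apply]

lemma psi_algebraMap (c : K) : (equivExterior Q).symm (algebraMap K _ c) = algebraMap K _ c := by
  rw [LinearEquiv.symm_apply_eq, E_algebraMap]

/-- The sign of reversion on grade `n`. -/
def sg (K : Type*) [Field K] : ℕ → K
  | 0 => 1
  | (n+1) => sg K n * (-1)^n

lemma sg_even (j : ℕ) : sg K (2 * j) = (-1)^j := by
  induction j with
  | zero => simp [sg]
  | succ j ih =>
    rw [show 2 * (j+1) = 2*j+1+1 by ring, sg, sg, ih]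
    simp [pow_succ, pow_mul]

lemma reverse_psi_step (n : ℕ) (h : ∀ Z ∈ ⋀[K]^n M,
      reverse ((equivExterior Q).symm Z) = sg K n • (equivExterior Q).symm Z)
    (h2 : ∀ v, ∀ Z ∈ ⋀[K]^n M, reverse ((equivExterior Q).symm (con Q v Z)) =
      -((-1)^n * sg K n) • (equivExterior Q).symm (con Q v Z)) :
    ∀ Z ∈ ⋀[K]^(n+1) M,
      reverse ((equivExterior Q).symm Z) = sg K (n+1) • (equivExterior Q).symm Z := by
  refine ext_ind n ?_ ?_
  · intro v Z hZ
    conv_lhs => rw [psi_ι_mul]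
    have hi : inv Z = (-1 : K)^n • Z := involute_mem n Z hZ
    rw [map_add, reverse.map_mul, reverse_ι, h Z hZ, h2 v Z hZ, smul_mul_assoc, psi_mul_ι, hi]
    rw [sg]
    simp only [mul_smul_comm, map_add, map_smul, smul_add, smul_smul, neg_smul, mul_comm]
    abel
  · intro x y hx hy
    simp only [map_add, hx, hy, smul_add]

lemma reverse_psi (n : ℕ) : ∀ Z ∈ ⋀[K]^n M,
      reverse ((equivExterior Q).symm Z) = sg K n • (equivExterior Q).symm Z := by
  induction n using Nat.strong_induction_on with
  | _ n ih =>
    match n, ih with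
    | 0, _ =>
      intro Z hZ
      obtain ⟨c, rfl⟩ := mem_zero hZ
      rw [psi_algebraMap, reverse.commutes, sg, one_smul]
    | 1, ih =>
      refine reverse_psi_step Q 0 (ih 0 (by omega)) ?_
      intro v Z hZ
      have : con Q v Z = 0 := contract_zero _ hZ
      simp [this]
    | (n+2), ih =>
      refine reverse_psi_step Q (n+1) (ih (n+1) (by omega)) ?_
      intro v Z hZ
      rw [ih n (by omega) (con Q v Z) (contract_mem _ n Z hZ), sg]
      congr 1
      have : ((-1 : K)^n) * (-1)^n = 1 := by rw [← mul_pow]; simp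
      rw [pow_succ]
      linear_combination (-sg K n) * this

/-- Elements of grade at least `m`. -/
def GG (K M : Type*) [Field K] [AddCommGroup M] [Module K M] (m : ℕ) :
    Submodule K (ExteriorAlgebra K M) := ⨆ c, ⨆ (_ : m ≤ c), ⋀[K]^c M

lemma mem_GG {m c : ℕ} (h : m ≤ c) {Z : ExteriorAlgebra K M} (hZ : Z ∈ ⋀[K]^c M) :
    Z ∈ GG K M m :=
  (le_iSup₂_of_le (a := ⋀[K]^c M) (f := fun c (_ : m ≤ c) => ⋀[K]^c M) c h le_rfl) hZ

lemma GG_mono {m m' : ℕ} (h : m ≤ m') {Z : ExteriorAlgebra K M} (hZ : Z ∈ GG K M m') :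
    Z ∈ GG K M m := by
  have : GG K M m' ≤ GG K M m := by
    refine iSup₂_le fun c hc Z hZ => ?_
    exact mem_GG (h.trans hc) hZ
  exact this hZ

lemma GG_ι (v : M) (m : ℕ) {Z : ExteriorAlgebra K M} (hZ : Z ∈ GG K M (m+1)) :
    ExteriorAlgebra.ι K v * Z - con Q v Z ∈ GG K M m := by
  have : GG K M (m+1) ≤ (GG K M m).comap
      (LinearMap.mulLeft K (ExteriorAlgebra.ι K v) - con Q v) := by
    refine iSup₂_le fun c hc Z hZ => ?_
    obtain ⟨c, rfl⟩ : ∃ c', c = c' + 1 := ⟨c - 1, by omega⟩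
    change ExteriorAlgebra.ι K v * Z - con Q v Z ∈ GG K M m
    refine Submodule.sub_mem _ ?_ ?_
    · exact mem_GG (by omega) (ι_mul_mem v hZ)
    · exact mem_GG (by omega) (contract_mem _ c Z hZ)
  exact this hZ

lemma psi_mul_mem_step (a : ℕ)
    (h : ∀ X ∈ ⋀[K]^a M, ∀ m y, equivExterior Q y ∈ GG K M (m + a) →
      equivExterior Q ((equivExterior Q).symm X * y) ∈ GG K M m)
    (h2 : ∀ v, ∀ X ∈ ⋀[K]^a M, ∀ m y, equivExterior Q y ∈ GG K M (m + (a + 1)) →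
      equivExterior Q ((equivExterior Q).symm (con Q v X) * y) ∈ GG K M m) :
    ∀ X ∈ ⋀[K]^(a+1) M, ∀ m y, equivExterior Q y ∈ GG K M (m + (a + 1)) →
      equivExterior Q ((equivExterior Q).symm X * y) ∈ GG K M m := by
  refine ext_ind a ?_ ?_
  · intro v X hX m y hy
    rw [psi_ι_mul, add_mul, map_add, mul_assoc, E_ι_mul]
    refine Submodule.add_mem _ ?_ (h2 v X hX m y hy)
    refine GG_ι Q v m (h X hX (m+1) y ?_)
    rwa [show m + 1 + a = m + (a+1) by ring]
  · intro X X' hX hX' m y hy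
    rw [map_add, add_mul, map_add]
    exact Submodule.add_mem _ (hX m y hy) (hX' m y hy)

lemma psi_mul_mem (a : ℕ) : ∀ X ∈ ⋀[K]^a M, ∀ m y, equivExterior Q y ∈ GG K M (m + a) →
      equivExterior Q ((equivExterior Q).symm X * y) ∈ GG K M m := by
  induction a using Nat.strong_induction_on with
  | _ n ih =>
    match n, ih with
    | 0, _ =>
      intro Z hZ m y hy
      obtain ⟨c, rfl⟩ := mem_zero hZ
      rw [psi_algebraMap, ← Algebra.smul_def, map_smul]
      exact Submodule.smul_mem _ _ hy
    | 1, ih =>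
      refine psi_mul_mem_step Q 0 (ih 0 (by omega)) ?_
      intro v Z hZ m y hy
      have : con Q v Z = 0 := contract_zero _ hZ
      simp [this]
    | (n+2), ih =>
      refine psi_mul_mem_step Q (n+1) (ih (n+1) (by omega)) ?_
      intro v Z hZ m y hy
      exact ih n (by omega) _ (contract_mem _ n Z hZ) m y (GG_mono (by omega) hy)

end general

section proj

variable {K : Type*} [Field K] [CharZero K] {M : Type*} [AddCommGroup M] [Module K M]
variable (Q : QuadraticForm K M)

lemma gradeProj_add (l : ℕ) (x y : CliffordAlgebra Q) :
    gradeProj Q l (x + y) = gradeProj Q l x + gradeProj Q l y := by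
  simp [gradeProj, DirectSum.decompose_add]

lemma gradeProj_smul (l : ℕ) (c : K) (x : CliffordAlgebra Q) :
    gradeProj Q l (c • x) = c • gradeProj Q l x := by
  rw [gradeProj, gradeProj, map_smul, DirectSum.decompose_smul,
    ← LinearEquiv.map_smul]
  rfl

/-- `gradeProj` as a linear map. -/
def gpL (l : ℕ) : CliffordAlgebra Q →ₗ[K] CliffordAlgebra Q where
  toFun := gradeProj Q l
  map_add' := gradeProj_add Q l
  map_smul' := gradeProj_smul Q l

lemma gpL_apply (l : ℕ) (x) : gpL Q l x = gradeProj Q l x := rfl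

lemma gradeProj_zero_algebraMap (c : K) :
    gradeProj Q 0 (algebraMap K _ c) = algebraMap K _ c := by
  letI : Invertible (2 : K) := invertibleOfNonzero two_ne_zero
  rw [gradeProj, E_algebraMap, DirectSum.decompose_of_mem_same (ℳ := fun n : ℕ => ⋀[K]^n M),
    psi_algebraMap]
  exact SetLike.algebraMap_mem_graded (fun n : ℕ => ⋀[K]^n M) c

lemma gradeProj_zero_scalar (x : CliffordAlgebra Q) :
    ∃ c : K, gradeProj Q 0 x = algebraMap K _ c := by
  letI : Invertible (2 : K) := invertibleOfNonzero two_ne_zero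
  rw [gradeProj]
  obtain ⟨c, hc⟩ := mem_zero
    (DirectSum.decompose (fun n : ℕ => ⋀[K]^n M) (equivExterior Q x) 0).2
  exact ⟨c, by rw [hc, psi_algebraMap]⟩

lemma gradeProj_reverse (x : CliffordAlgebra Q) :
    gradeProj Q 0 (reverse x) = gradeProj Q 0 x := by
  letI : Invertible (2 : K) := invertibleOfNonzero two_ne_zero
  obtain ⟨Z, rfl⟩ := (equivExterior Q).symm.surjective x
  induction Z using DirectSum.Decomposition.inductionOn (fun n : ℕ => ⋀[K]^n M) with
  | zero => simp
  | @homogeneous n Z =>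
    rw [reverse_psi Q n Z Z.2, gradeProj_smul]
    rcases Nat.eq_zero_or_pos n with rfl | hn
    · simp [sg]
    · have : gradeProj Q 0 ((equivExterior Q).symm (Z : ExteriorAlgebra K M)) = 0 := by
        rw [gradeProj, LinearEquiv.apply_symm_apply,
          DirectSum.decompose_of_mem_ne (fun n : ℕ => ⋀[K]^n M) Z.2 (by omega), map_zero]
      rw [this, smul_zero]
  | add x y hx hy => simp only [map_add, gradeProj_add, hx, hy]

lemma gradeProj_zero_of_mem (x : CliffordAlgebra Q)
    (h : letI : Invertible (2 : K) := invertibleOfNonzero two_ne_zero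
      equivExterior Q x ∈ GG K M 1) : gradeProj Q 0 x = 0 := by
  letI : Invertible (2 : K) := invertibleOfNonzero two_ne_zero
  have h0 : GG K M 1 ≤ LinearMap.ker (gpL Q 0 ∘ₗ (equivExterior Q).symm.toLinearMap) := by
    refine iSup₂_le fun c hc Z hZ => ?_
    change gradeProj Q 0 ((equivExterior Q).symm Z) = 0
    rw [gradeProj, LinearEquiv.apply_symm_apply,
          DirectSum.decompose_of_mem_ne (fun n : ℕ => ⋀[K]^n M) hZ (by omega), map_zero]
  have := h0 h
  change gradeProj Q 0 ((equivExterior Q).symm (equivExterior Q x)) = 0 at this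
  rwa [LinearEquiv.symm_apply_apply] at this

lemma reverse_grade (l : ℕ) (x : CliffordAlgebra Q) :
    reverse (gradeProj Q l x) = sg K l • gradeProj Q l x := by
  letI : Invertible (2 : K) := invertibleOfNonzero two_ne_zero
  exact reverse_psi Q l _ (DirectSum.decompose (fun n : ℕ => ⋀[K]^n M) (equivExterior Q x) l).2

lemma orth_lt (a b : ℕ) (h : a < b) (x y : CliffordAlgebra Q) :
    gradeProj Q 0 (gradeProj Q a x * gradeProj Q b y) = 0 := by
  letI : Invertible (2 : K) := invertibleOfNonzero two_ne_zero
  apply gradeProj_zero_of_mem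
  refine psi_mul_mem Q a _
    (DirectSum.decompose (fun n : ℕ => ⋀[K]^n M) (equivExterior Q x) a).2 1 _ ?_
  rw [gradeProj, LinearEquiv.apply_symm_apply]
  exact mem_GG (by omega)
    (DirectSum.decompose (fun n : ℕ => ⋀[K]^n M) (equivExterior Q y) b).2

lemma orth (a b : ℕ) (h : a ≠ b) (x y : CliffordAlgebra Q) :
    gradeProj Q 0 (gradeProj Q a x * gradeProj Q b y) = 0 := by
  rcases lt_or_gt_of_ne h with h | h
  · exact orth_lt Q a b h x y
  · rw [← gradeProj_reverse, reverse.map_mul, reverse_grade, reverse_grade, smul_mul_assoc,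
      mul_smul_comm, gradeProj_smul, gradeProj_smul, orth_lt Q b a h, smul_zero, smul_zero]

lemma reverse_Wj (B : CliffordAlgebra Q) (j : ℕ) : reverse (Wj Q B j) = (-1 : K)^j • Wj Q B j := by
  rw [Wj, map_smul, reverse_grade, sg_even, smul_comm]

lemma orth_Wj (B : CliffordAlgebra Q) (i j : ℕ) (h : i ≠ j) :
    gradeProj Q 0 (Wj Q B i * Wj Q B j) = 0 := by
  rw [Wj, Wj, smul_mul_assoc, mul_smul_comm, gradeProj_smul, gradeProj_smul,
    orth Q _ _ (by omega), smul_zero, smul_zero]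

lemma Mpoly_scalar (B : CliffordAlgebra Q) (k : ℕ) (μ : K) :
    gradeProj Q 0 (Mpoly Q B k μ * reverse (Mpoly Q B k μ)) =
      ∑ j ∈ Finset.range (k+1), ((-1)^j * (μ^2)^(k-j)) • gradeProj Q 0 (Wj Q B j * Wj Q B j) := by
  rw [Mpoly, map_sum, Finset.sum_mul_sum, ← gpL_apply, map_sum]
  refine Finset.sum_congr rfl fun i hi => ?_
  rw [map_sum, Finset.sum_eq_single_of_mem i hi]
  · rw [map_smul, reverse_Wj, smul_mul_assoc, mul_smul_comm, mul_smul_comm, map_smul, map_smul,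
      map_smul, smul_smul, smul_smul, gpL_apply]
    congr 1
    rw [← neg_sq μ, ← pow_mul]
    ring
  · intro j _ hj
    rw [map_smul, reverse_Wj, smul_mul_assoc, mul_smul_comm, mul_smul_comm, map_smul, map_smul,
      map_smul, gpL_apply, orth_Wj Q B i j hj.symm]
    simp

end proj

lemma poly_part (k : ℕ) (c : ℕ → ℂ) (f : Fin k → ℂ)
    (h : ∀ μ : ℂ, ∑ j ∈ Finset.range (k+1), ((-1)^j * (μ^2)^(k-j)) * c j =
      ∏ i, (μ^2 - f i)) (j : ℕ) (hj : j ≤ k) :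
    c j = ∑ A ∈ Finset.powersetCard j (Finset.univ : Finset (Fin k)), ∏ i ∈ A, f i := by
  open Polynomial in
  have hp : (∑ j ∈ Finset.range (k+1), C ((-1)^j * c j) * X^(k-j) : ℂ[X]) =
      ∏ i, (X + C (- f i)) := by
    apply Polynomial.funext
    intro z
    obtain ⟨μ, rfl⟩ : ∃ μ : ℂ, z = μ^2 := (IsAlgClosed.exists_pow_nat_eq z two_pos).imp
      fun _ h => h.symm
    have := h μ
    simp only [Polynomial.eval_finset_sum, Polynomial.eval_prod, Polynomial.eval_mul,
      Polynomial.eval_C, Polynomial.eval_pow, Polynomial.eval_X, Polynomial.eval_add,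
      ← sub_eq_add_neg]
    rw [← this]
    exact Finset.sum_congr rfl fun i _ => by ring
  have h1 := congrArg (fun p => Polynomial.coeff p (k - j)) hp
  simp only [Polynomial.finset_sum_coeff, Polynomial.coeff_C_mul_X_pow] at h1
  rw [Finset.prod_X_add_C_coeff _ _ (by simp), Finset.card_univ, Fintype.card_fin,
    Finset.sum_eq_single_of_mem j (by simp; omega), if_pos rfl,
    show k - (k - j) = j by omega] at h1
  · have h2 : ∀ A ∈ Finset.powersetCard j (Finset.univ : Finset (Fin k)),
        ∏ i ∈ A, (- f i) = (-1)^j * ∏ i ∈ A, f i := by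
      intro A hA
      rw [Finset.prod_neg, (Finset.mem_powersetCard.mp hA).2]
    rw [Finset.sum_congr rfl h2, ← Finset.mul_sum] at h1
    exact mul_left_cancel₀ (pow_ne_zero _ (by norm_num)) h1
  · intro i hi hij
    rw [if_neg]
    simp at hi
    omega

end WjProof

end

open CliffordAlgebra in
/-- if `±μ₁, …, ±μ_k ∈ ℂ` are the roots (with multiplicity) of the
characteristic polynomial `P_{2k}(μ) = M_μ M̃_μ` of a bivector `B` of effective dimension `2k`,
then `⟨W_j²⟩₀ = e_j(μ₁², …, μ_k²)` for all `1 ≤ j ≤ k`. -/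
theorem Wj_sq_scalar_eq_esymm (p q r : ℕ) (B : CliffordAlgebra (sigQ p q r))
    (hB : IsGrade (sigQ p q r) 2 B) (k : ℕ) (hk : HasEffDim (sigQ p q r) B k)
    (μs : Fin k → ℂ)
    (hroots : ∀ μ : ℂ,
      Mpoly (sigQc p q r) (toC p q r B) k μ * reverse (Mpoly (sigQc p q r) (toC p q r B) k μ)
        = algebraMap ℂ (CliffordAlgebra (sigQc p q r)) (∏ i : Fin k, (μ ^ 2 - μs i ^ 2))) :
    ∀ j : ℕ, 1 ≤ j → j ≤ k →
      gradeProj (sigQc p q r) 0 (Wj (sigQc p q r) (toC p q r B) j * Wj (sigQc p q r) (toC p q r B) j)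
        = algebraMap ℂ (CliffordAlgebra (sigQc p q r))
            (∑ A ∈ Finset.powersetCard j (Finset.univ : Finset (Fin k)), ∏ i ∈ A, μs i ^ 2) := by
  classical
  have hinj : Function.Injective (algebraMap ℂ (CliffordAlgebra (sigQc p q r))) := by
    letI : Invertible (2 : ℂ) := invertibleOfNonzero two_ne_zero
    exact FaithfulSMul.algebraMap_injective ℂ _
  choose c hc using fun j => WjProof.gradeProj_zero_scalar (sigQc p q r)
    (Wj (sigQc p q r) (toC p q r B) j * Wj (sigQc p q r) (toC p q r B) j)
  intro j _ hj
  rw [hc]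
  congr 1
  refine WjProof.poly_part k c (fun i => μs i ^ 2) ?_ j hj
  intro μ
  apply hinj
  rw [← WjProof.gradeProj_zero_algebraMap (sigQc p q r) (∏ i, _), ← hroots μ,
    WjProof.Mpoly_scalar, map_sum]
  refine Finset.sum_congr rfl fun i _ => ?_
  rw [hc, map_mul, ← Algebra.smul_def]
end

section
/- If W_k is the effective pseudoscalar of a bivector B in ℝ_{p,q,r} and ±μ₁, …, ±μ_k ∈ ℂ are the roots (with multiplicity) of its characteristic polynomial P_{2k}, then W_k² = μ₁² μ₂² ⋯ μ_k², the product of all the squared eigenvalues of B. -/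
namespace PseudoAux

open CliffordAlgebra

variable {R : Type*} [CommRing R] {V : Type*} [AddCommGroup V] [Module R V]
variable {Q Q' : QuadraticForm R V}

theorem contractLeft_mul_iota (d : Module.Dual R V) (m : V) (x : CliffordAlgebra Q) :
    contractLeft d (x * ι Q m) = contractLeft d x * ι Q m + d m • involute x := by
  induction x using CliffordAlgebra.left_induction with
  | algebraMap r =>
    rw [contractLeft_algebraMap_mul, contractLeft_ι, contractLeft_algebraMap, AlgHom.commutes,
      zero_mul, zero_add, Algebra.smul_def, Algebra.commutes]
  | add x y hx hy => simp only [add_mul, map_add, hx, hy, smul_add]; abel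
  | ι_mul x a hx =>
    rw [mul_assoc, contractLeft_ι_mul, hx, contractLeft_ι_mul, map_mul, involute_ι]
    simp only [mul_add, sub_mul, smul_mul_assoc, mul_smul_comm, neg_mul, smul_neg, mul_assoc]
    abel

theorem contractRight_iota_mul (d : Module.Dual R V) (m : V) (x : CliffordAlgebra Q) :
    contractRight (ι Q m * x) d = ι Q m * contractRight x d + d m • involute x := by
  rw [contractRight_eq, contractRight_eq, reverse.map_mul, reverse_ι, contractLeft_mul_iota,
    map_add, reverse.map_mul, reverse_ι, map_smul, reverse_involute, reverse_reverse]

theorem contractLeft_involute (d : Module.Dual R V) (x : CliffordAlgebra Q) :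
    contractLeft d (involute x) = - involute (contractLeft d x) := by
  induction x using CliffordAlgebra.left_induction with
  | algebraMap r => simp
  | add x y hx hy => simp only [map_add, hx, hy, neg_add]
  | ι_mul x a hx =>
    rw [map_mul, involute_ι, neg_mul, map_neg, contractLeft_ι_mul, contractLeft_ι_mul, hx,
      map_sub, map_smul, map_mul, involute_ι]
    simp

theorem contractRight_contractLeft (d d' : Module.Dual R V) (x : CliffordAlgebra Q) :
    contractLeft d (contractRight x d') = contractRight (contractLeft d x) d' := by
  induction x using CliffordAlgebra.left_induction with
  | algebraMap r => simp
  | add x y hx hy => simp only [map_add, LinearMap.add_apply, hx, hy]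
  | ι_mul x a hx =>
    rw [contractRight_iota_mul, map_add, contractLeft_ι_mul, contractLeft_ι_mul, map_smul,
      contractLeft_involute, map_sub, LinearMap.sub_apply, contractRight_iota_mul, hx,
      map_smul, LinearMap.smul_apply, smul_neg]
    abel

theorem changeForm_mul_iota {B : LinearMap.BilinForm R V} (h : B.toQuadraticMap = Q' - Q)
    (hs : ∀ a b, B a b = B b a) (m : V) (x : CliffordAlgebra Q) :
    changeForm h (x * ι Q m) = changeForm h x * ι Q' m - contractRight (changeForm h x) (B m) := by
  induction x using CliffordAlgebra.left_induction with
  | algebraMap r =>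
    rw [changeForm_algebraMap, contractRight_algebraMap, ← Algebra.smul_def, ← Algebra.smul_def,
      map_smul, changeForm_ι, sub_zero]
  | add x y hx hy => simp only [add_mul, map_add, LinearMap.add_apply, hx, hy]; abel
  | ι_mul x a hx =>
    rw [mul_assoc, changeForm_ι_mul, hx, changeForm_ι_mul, map_sub, contractLeft_mul_iota,
      contractRight_contractLeft, map_sub, LinearMap.sub_apply, contractRight_iota_mul, hs a m,
      mul_sub, sub_mul, mul_assoc]
    abel

theorem reverse_changeForm {B : LinearMap.BilinForm R V} (h : B.toQuadraticMap = Q' - Q)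
    (hs : ∀ a b, B a b = B b a) (x : CliffordAlgebra Q) :
    reverse (changeForm h x) = changeForm h (reverse x) := by
  induction x using CliffordAlgebra.left_induction with
  | algebraMap r => simp
  | add x y hx hy => simp only [map_add, hx, hy]
  | ι_mul x a hx =>
    rw [changeForm_ι_mul, map_sub, reverse.map_mul, reverse.map_mul, reverse_ι, reverse_ι,
      changeForm_mul_iota h hs, contractRight_eq, ← hx, reverse_reverse]

theorem ext_mul_iota {n : ℕ} {x : ExteriorAlgebra R V} (hx : x ∈ ⋀[R]^n V) (a : V) :
    x * ExteriorAlgebra.ι R a = (-1 : R) ^ n • (ExteriorAlgebra.ι R a * x) := by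
  induction hx using Submodule.pow_induction_on_left' with
  | algebraMap r => rw [pow_zero, one_smul, Algebra.commutes]
  | add x y i _ _ hx hy => rw [add_mul, hx, hy, mul_add, smul_add]
  | mem_mul m hm i x _ hx =>
    obtain ⟨b, rfl⟩ := hm
    rw [mul_assoc, hx, mul_smul_comm, ← mul_assoc, ← mul_assoc,
      eq_neg_of_add_eq_zero_left (ExteriorAlgebra.ι_add_mul_swap b a), Nat.succ_eq_add_one,
      pow_succ, mul_smul, neg_one_smul, neg_mul]

theorem ext_reverse {n : ℕ} {x : ExteriorAlgebra R V} (hx : x ∈ ⋀[R]^n V) :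
    reverse (Q := (0 : QuadraticForm R V)) x = (-1 : R) ^ (n.choose 2) • x := by
  induction hx using Submodule.pow_induction_on_left' with
  | algebraMap r => simpa using reverse.commutes (Q := (0 : QuadraticForm R V)) r
  | add x y i _ _ hx hy =>
    rw [smul_add, ← hx, ← hy]; exact map_add (reverse (Q := (0 : QuadraticForm R V))) x y
  | mem_mul m hm i x hx' hx =>
    obtain ⟨b, rfl⟩ := hm
    have h1 := reverse.map_mul (Q := (0 : QuadraticForm R V)) (ι _ b) x
    rw [reverse_ι] at h1
    refine h1.trans ?_
    rw [hx]
    refine (smul_mul_assoc _ _ _).trans ?_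
    refine (congrArg _ (ext_mul_iota hx' b)).trans ?_
    rw [smul_smul, ← pow_add, Nat.succ_eq_add_one, Nat.choose_succ_succ' i 1, Nat.choose_one_right,
      add_comm]

theorem reverse_gradeProj {K : Type*} [Field K] [CharZero K] {M : Type*} [AddCommGroup M]
    [Module K M] (Q : QuadraticForm K M) (l : ℕ) (x : CliffordAlgebra Q) :
    reverse (gradeProj Q l x) = (-1 : K) ^ (l.choose 2) • gradeProj Q l x := by
  letI : Invertible (2 : K) := invertibleOfNonzero two_ne_zero
  unfold gradeProj
  rw [← map_smul, ← ext_reverse (SetLike.coe_mem _)]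
  refine reverse_changeForm (changeForm.neg_proof changeForm.associated_neg_proof) ?_ _
  intro a b
  rw [LinearMap.neg_apply, LinearMap.neg_apply, LinearMap.neg_apply, LinearMap.neg_apply]
  congr 1
  simp [QuadraticMap.associated_apply, add_comm]
  try ring

theorem choose_parity (k : ℕ) : (-1 : ℂ) ^ ((2 * k).choose 2) = (-1) ^ k := by
  have h : (2 * k).choose 2 = k * (2 * k - 1) := by
    rw [Nat.choose_two_right, mul_assoc, Nat.mul_div_cancel_left _ two_pos]
  rw [h]
  rcases k with _ | k
  · simp
  · rw [show 2 * (k + 1) - 1 = 2 * k + 1 by omega, mul_comm, pow_mul]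
    congr 1
    simp [pow_succ, pow_mul]

end PseudoAux

open CliffordAlgebra in
/-- if `W_k` is the effective pseudoscalar of `B` and `±μ₁, …, ±μ_k` are the
roots (with multiplicity) of its characteristic polynomial, then `W_k² = μ₁²μ₂²⋯μ_k²`. -/
theorem effPseudoscalar_sq_eq_prod_eigenvalues_sq (p q r : ℕ) (B : CliffordAlgebra (sigQ p q r))
    (hB : IsGrade (sigQ p q r) 2 B) (k : ℕ) (hk : HasEffDim (sigQ p q r) B k)
    (μs : Fin k → ℂ)
    (hroots : ∀ μ : ℂ,
      Mpoly (sigQc p q r) (toC p q r B) k μ * reverse (Mpoly (sigQc p q r) (toC p q r B) k μ)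
        = algebraMap ℂ (CliffordAlgebra (sigQc p q r)) (∏ i : Fin k, (μ ^ 2 - μs i ^ 2))) :
    Wj (sigQc p q r) (toC p q r B) k * Wj (sigQc p q r) (toC p q r B) k
      = algebraMap ℂ (CliffordAlgebra (sigQc p q r)) (∏ i : Fin k, μs i ^ 2) := by
  have h0 := hroots 0
  have hM : Mpoly (sigQc p q r) (toC p q r B) k 0 = Wj (sigQc p q r) (toC p q r B) k := by
    unfold Mpoly
    rw [Finset.sum_eq_single k]
    · simp
    · intro j hj hjk
      have : k - j ≠ 0 := by have := Finset.mem_range.mp hj; omega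
      rw [neg_zero, zero_pow this, zero_smul]
    · intro h; simp at h
  have hrev : reverse (Wj (sigQc p q r) (toC p q r B) k)
      = (-1 : ℂ) ^ k • Wj (sigQc p q r) (toC p q r B) k := by
    unfold Wj
    rw [map_smul, PseudoAux.reverse_gradeProj, PseudoAux.choose_parity, smul_comm]
  rw [hM, hrev, mul_smul_comm] at h0
  have h2 := congrArg (fun z => (-1 : ℂ) ^ k • z) h0
  simp only [smul_smul, ← mul_pow] at h2
  rw [neg_one_mul, neg_neg, one_pow, one_smul, Algebra.smul_def, ← map_mul] at h2
  rw [h2]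
  congr 1
  have : ∀ i : Fin k, (0 : ℂ) ^ 2 - μs i ^ 2 = (-1) * μs i ^ 2 := fun i => by ring
  simp only [this, Finset.prod_mul_distrib, Finset.prod_const, Finset.card_univ, Fintype.card_fin]
  rw [← mul_assoc, ← mul_pow]
  simp
end

section
/- Let B₁ and B₂ be commuting bivectors in ℝ_{p,q,r}, i.e. B₁ × B₂ = 0, and let B := B₁ + B₂. Then for every a ≥ 0 one has W_a^{(B)} = Σ_{j=0}^a W_j^{(B₁)} ∧ W_{a−j}^{(B₂)}, where W_j^{(C)} := (1/j!)⟨C^j⟩_{2j} for a bivector C. -/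
namespace WjAux

open CliffordAlgebra

section filtration

variable {R : Type*} [CommRing R] {V : Type*} [AddCommGroup V] [Module R V]

/-- The standard filtration of a Clifford algebra: products of at most `n` vectors. -/
def filt (Q : QuadraticForm R V) (n : ℕ) : Submodule R (CliffordAlgebra Q) :=
  (1 ⊔ LinearMap.range (ι Q)) ^ n

theorem filt_succ_of_mem {Q : QuadraticForm R V} {n : ℕ} {x : CliffordAlgebra Q}
    (hx : x ∈ filt Q n) : x ∈ filt Q (n + 1) := by
  unfold filt at *
  rw [pow_succ', ← one_mul x]
  exact Submodule.mul_mem_mul (Submodule.mem_sup_left (Submodule.one_le.mp le_rfl)) hx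

theorem filt_ι_mul {Q : QuadraticForm R V} {n : ℕ} {x : CliffordAlgebra Q} (v : V)
    (hx : x ∈ filt Q n) : ι Q v * x ∈ filt Q (n + 1) := by
  unfold filt at *
  rw [pow_succ']
  exact Submodule.mul_mem_mul (Submodule.mem_sup_right ⟨v, rfl⟩) hx

theorem filt_mul {Q : QuadraticForm R V} {m n : ℕ} {x y : CliffordAlgebra Q}
    (hx : x ∈ filt Q m) (hy : y ∈ filt Q n) : x * y ∈ filt Q (m + n) := by
  unfold filt at *
  rw [pow_add]
  exact Submodule.mul_mem_mul hx hy

theorem filt_algebraMap {Q : QuadraticForm R V} (r : R) :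
    algebraMap R (CliffordAlgebra Q) r ∈ filt Q 0 := by
  unfold filt
  rw [pow_zero]
  exact Submodule.algebraMap_mem r

theorem filt_pow {Q : QuadraticForm R V} {m : ℕ} {x : CliffordAlgebra Q}
    (hx : x ∈ filt Q m) (j : ℕ) : x ^ j ∈ filt Q (m * j) := by
  induction j with
  | zero => simpa using filt_algebraMap (Q := Q) 1
  | succ j ih => rw [pow_succ, Nat.mul_succ]; exact filt_mul ih hx

theorem filt_induction {Q : QuadraticForm R V} {P : ℕ → CliffordAlgebra Q → Prop}
    (halg : ∀ r : R, P 0 (algebraMap R _ r))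
    (hadd : ∀ n x y, P n x → P n y → P n (x + y))
    (hsmul : ∀ n (r : R) x, x ∈ filt Q n → P n x → P (n + 1) (r • x))
    (hι : ∀ n v x, x ∈ filt Q n → P n x → P (n + 1) (ι Q v * x))
    {n : ℕ} {x : CliffordAlgebra Q} (hx : x ∈ filt Q n) : P n x := by
  unfold filt at hx
  refine Submodule.pow_induction_on_left' _ (C := fun n x _ => P n x) halg
    (fun x y i _ _ h1 h2 => hadd i x y h1 h2) ?_ hx
  intro m hm i x hx hP
  obtain ⟨a, ha, b, ⟨v, rfl⟩, rfl⟩ := Submodule.mem_sup.mp hm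
  obtain ⟨r, rfl⟩ := Submodule.mem_one.mp ha
  rw [add_mul, ← Algebra.smul_def]
  exact hadd _ _ _ (hsmul _ _ _ hx hP) (hι _ _ _ hx hP)

theorem filt_contractLeft {Q : QuadraticForm R V} (d : Module.Dual R V) {n : ℕ}
    {x : CliffordAlgebra Q} (hx : x ∈ filt Q n) : contractLeft d x ∈ filt Q n := by
  refine filt_induction (P := fun n x => contractLeft d x ∈ filt Q n) ?_ ?_ ?_ ?_ hx
  · intro r
    rw [contractLeft_algebraMap]
    exact zero_mem _
  · intro n x y h1 h2
    rw [map_add]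
    exact add_mem h1 h2
  · intro n r x _ h
    rw [map_smul]
    exact Submodule.smul_mem _ _ (filt_succ_of_mem h)
  · intro n v x hx h
    rw [contractLeft_ι_mul]
    exact sub_mem (Submodule.smul_mem _ _ (filt_succ_of_mem hx)) (filt_ι_mul v h)

theorem filt_changeForm {Q Q' : QuadraticForm R V} {B : LinearMap.BilinForm R V}
    (h : B.toQuadraticMap = Q' - Q) {n : ℕ}
    {x : CliffordAlgebra Q} (hx : x ∈ filt Q n) : changeForm h x ∈ filt Q' n := by
  refine filt_induction (P := fun n x => changeForm h x ∈ filt Q' n) ?_ ?_ ?_ ?_ hx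
  · intro r
    rw [changeForm_algebraMap]
    exact filt_algebraMap r
  · intro n x y h1 h2
    rw [map_add]
    exact add_mem h1 h2
  · intro n r x _ h
    rw [map_smul]
    exact Submodule.smul_mem _ _ (filt_succ_of_mem h)
  · intro n v x hx h
    rw [changeForm_ι_mul]
    exact sub_mem (filt_ι_mul v h) (filt_succ_of_mem (filt_contractLeft _ h))

/-- Grade projection on the exterior algebra. -/
noncomputable def pr (k : ℕ) : ExteriorAlgebra R V →ₗ[R] ExteriorAlgebra R V :=
  GradedAlgebra.proj (fun n : ℕ => ⋀[R]^n V) k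

theorem pr_apply (k : ℕ) (x : ExteriorAlgebra R V) :
    pr k x = (DirectSum.decompose (fun n : ℕ => ⋀[R]^n V) x k : ExteriorAlgebra R V) := rfl

theorem ι_mem_one (v : V) : (ι (0 : QuadraticForm R V) v : ExteriorAlgebra R V) ∈ ⋀[R]^1 V := by
  rw [ExteriorAlgebra.exteriorPower, pow_one]
  exact ⟨v, rfl⟩

theorem pr_ι_mul (k : ℕ) (v : V) (x : ExteriorAlgebra R V) :
    pr (k + 1) (ι (0 : QuadraticForm R V) v * x) = ι (0 : QuadraticForm R V) v * pr k x := by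
  rw [add_comm k 1]
  exact DirectSum.coe_decompose_mul_add_of_left_mem (fun n : ℕ => ⋀[R]^n V) (ι_mem_one v)

theorem algebraMap_mem_zero (r : R) :
    algebraMap R (ExteriorAlgebra R V) r ∈ ⋀[R]^0 V := by
  rw [ExteriorAlgebra.exteriorPower, pow_zero]
  exact Submodule.algebraMap_mem r

theorem pr_of_mem {k : ℕ} {x : ExteriorAlgebra R V} (hx : x ∈ ⋀[R]^k V) : pr k x = x :=
  DirectSum.decompose_of_mem_same (fun n : ℕ => ⋀[R]^n V) hx

theorem pr_of_mem_ne {k l : ℕ} {x : ExteriorAlgebra R V} (hx : x ∈ ⋀[R]^k V) (h : k ≠ l) :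
    pr l x = 0 :=
  DirectSum.decompose_of_mem_ne (fun n : ℕ => ⋀[R]^n V) hx h

theorem pr_mem (k : ℕ) (x : ExteriorAlgebra R V) : pr k x ∈ ⋀[R]^k V :=
  SetLike.coe_mem _

theorem pr_filt {n : ℕ} {x : ExteriorAlgebra R V} (hx : x ∈ filt (0 : QuadraticForm R V) n) :
    ∀ k, n < k → pr k x = 0 := by
  refine filt_induction (P := fun n (x : ExteriorAlgebra R V) => ∀ k, n < k → pr k x = 0)
    ?_ ?_ ?_ ?_ hx
  · intro r k hk
    exact pr_of_mem_ne (algebraMap_mem_zero r) hk.ne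
  · intro n x y h1 h2 k hk
    rw [map_add, h1 k hk, h2 k hk, add_zero]
  · intro n r x _ h k hk
    rw [map_smul, h k (by omega), smul_zero]
  · intro n v x hx h k hk
    obtain ⟨k, rfl⟩ : ∃ l, k = l + 1 := ⟨k - 1, by omega⟩
    rw [pr_ι_mul, h k (by omega), mul_zero]

theorem ext_le_filt (n : ℕ) : ⋀[R]^n V ≤ filt (0 : QuadraticForm R V) n := by
  unfold filt ExteriorAlgebra.exteriorPower
  exact pow_le_pow_left' le_sup_right n

/-- The top component of a product is the product of the top components. -/
theorem pr_changeForm_mul {Q : QuadraticForm R V} {B : LinearMap.BilinForm R V}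
    (h : B.toQuadraticMap = 0 - Q) {m n : ℕ} {x y : CliffordAlgebra Q}
    (hx : x ∈ filt Q m) (hy : y ∈ filt Q n) :
    (pr (m + n) (changeForm h (x * y)) : ExteriorAlgebra R V)
      = pr m (changeForm h x) * pr n (changeForm h y) := by
  refine filt_induction (P := fun m x =>
    (pr (m + n) (changeForm h (x * y)) : ExteriorAlgebra R V)
      = pr m (changeForm h x) * pr n (changeForm h y)) ?_ ?_ ?_ ?_ hx
  · intro r
    rw [← Algebra.smul_def, map_smul, map_smul, changeForm_algebraMap, zero_add,
      pr_of_mem (algebraMap_mem_zero r), ← Algebra.smul_def]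
  · intro m x x' h1 h2
    rw [add_mul, map_add, map_add, map_add, map_add, h1, h2, add_mul]
  · intro m r x hx _
    rw [smul_mul_assoc, map_smul, map_smul, map_smul, map_smul,
      pr_filt (filt_changeForm h (filt_mul hx hy)) _ (by omega),
      pr_filt (filt_changeForm h hx) _ (by omega), smul_zero, zero_mul]
  · intro m v x hx hP
    rw [mul_assoc, changeForm_ι_mul, changeForm_ι_mul, map_sub, map_sub,
      pr_filt (filt_contractLeft _ (filt_changeForm h (filt_mul hx hy))) _ (by omega),
      pr_filt (filt_contractLeft _ (filt_changeForm h hx)) _ (by omega), sub_zero, sub_zero,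
      add_right_comm, pr_ι_mul, pr_ι_mul, hP, mul_assoc]

end filtration

section grade

variable {K : Type*} [Field K] [CharZero K] {M : Type*} [AddCommGroup M] [Module K M]
variable (Q : QuadraticForm K M)

theorem exists_form : ∃ (B : LinearMap.BilinForm K M) (h : B.toQuadraticMap = 0 - Q),
    ∀ ℓ x, gradeProj Q ℓ x
      = changeForm (changeForm.neg_proof h) (pr ℓ (changeForm h x) : ExteriorAlgebra K M) := by
  letI : Invertible (2 : K) := invertibleOfNonzero two_ne_zero
  exact ⟨_, changeForm.associated_neg_proof, fun ℓ x => rfl⟩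

theorem gradeProj_mem_filt (ℓ : ℕ) (x : CliffordAlgebra Q) : gradeProj Q ℓ x ∈ filt Q ℓ := by
  obtain ⟨B, h, hB⟩ := exists_form Q
  rw [hB]
  exact filt_changeForm _ (ext_le_filt _ (pr_mem _ _))

theorem gradeProj_mul {m n : ℕ} {x y : CliffordAlgebra Q} (hx : x ∈ filt Q m)
    (hy : y ∈ filt Q n) :
    gradeProj Q (m + n) (gradeProj Q m x * gradeProj Q n y) = gradeProj Q (m + n) (x * y) := by
  have h1 := gradeProj_mem_filt Q m x
  have h2 := gradeProj_mem_filt Q n y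
  obtain ⟨B, h, hB⟩ := exists_form Q
  rw [hB (m + n), hB (m + n), pr_changeForm_mul h h1 h2, pr_changeForm_mul h hx hy]
  have key : ∀ z : ExteriorAlgebra K M, changeForm h (changeForm (changeForm.neg_proof h) z) = z :=
    fun z => (changeFormEquiv h).apply_symm_apply z
  rw [hB m, hB n, key, key, pr_of_mem (pr_mem _ _), pr_of_mem (pr_mem _ _)]

/-- `gradeProj` as a linear map. -/
theorem gradeProj_linear (ℓ : ℕ) :
    ∃ L : CliffordAlgebra Q →ₗ[K] CliffordAlgebra Q, ∀ x, gradeProj Q ℓ x = L x := by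
  obtain ⟨B, h, hB⟩ := exists_form Q
  exact ⟨(changeForm (changeForm.neg_proof h)).comp ((pr ℓ).comp (changeForm h)),
    fun x => hB ℓ x⟩

theorem main (B₁ B₂ : CliffordAlgebra Q) (hB₁ : IsGrade Q 2 B₁) (hB₂ : IsGrade Q 2 B₂)
    (hcomm : cprod B₁ B₂ = 0) (a : ℕ) :
    Wj Q (B₁ + B₂) a = ∑ j ∈ Finset.range (a + 1),
      gradeProj Q (2 * j + 2 * (a - j)) (Wj Q B₁ j * Wj Q B₂ (a - j)) := by
  have m1 : B₁ ∈ filt Q 2 := hB₁ ▸ gradeProj_mem_filt Q 2 B₁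
  have m2 : B₂ ∈ filt Q 2 := hB₂ ▸ gradeProj_mem_filt Q 2 B₂
  have hc : Commute B₁ B₂ := by
    unfold cprod at hcomm
    exact sub_eq_zero.mp ((smul_eq_zero.mp hcomm).resolve_left (inv_ne_zero two_ne_zero))
  have hterm : ∀ j ∈ Finset.range (a + 1),
      gradeProj Q (2 * j + 2 * (a - j)) (Wj Q B₁ j * Wj Q B₂ (a - j))
        = ((a.factorial : K)⁻¹) • gradeProj Q (2 * a) (B₁ ^ j * B₂ ^ (a - j) * (a.choose j : ℕ)) := by
    intro j hj
    have hja : j ≤ a := by simpa [Nat.lt_succ_iff] using hj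
    have e := gradeProj_mul Q (filt_pow m1 j) (filt_pow m2 (a - j))
    have e2 : 2 * j + 2 * (a - j) = 2 * a := by omega
    rw [e2] at e ⊢
    unfold Wj
    obtain ⟨L, hL⟩ := gradeProj_linear Q (2 * a)
    rw [hL, hL] at e
    rw [hL, hL, smul_mul_smul_comm, map_smul, e, ← nsmul_eq_mul', map_nsmul,
      ← Nat.cast_smul_eq_nsmul K, smul_smul]
    congr 1
    have f := Nat.choose_mul_factorial_mul_factorial hja
    have f' : (a.choose j : K) * j.factorial * (a - j).factorial = a.factorial := by
      exact_mod_cast f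
    have n1 : (j.factorial : K) ≠ 0 := by exact_mod_cast j.factorial_ne_zero
    have n2 : ((a - j).factorial : K) ≠ 0 := by exact_mod_cast (a - j).factorial_ne_zero
    have n3 : (a.factorial : K) ≠ 0 := by exact_mod_cast a.factorial_ne_zero
    field_simp
    rw [← f']
    ring
  rw [Finset.sum_congr rfl hterm, ← Finset.smul_sum]
  unfold Wj
  obtain ⟨L, hL⟩ := gradeProj_linear Q (2 * a)
  simp only [hL]
  rw [hc.add_pow, map_sum]

end grade

end WjAux

/-- for commuting bivectors `B₁, B₂` (`B₁ × B₂ = 0`) and `B := B₁ + B₂`, one has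
`W_a^{(B)} = Σ_{j=0}^a W_j^{(B₁)} ∧ W_{a-j}^{(B₂)}` for every `a ≥ 0`, where the wedge of the
grade-`2j` and grade-`2(a-j)` elements is the grade-`(2j + 2(a-j))` part of their product. -/
theorem Wj_sum_of_commuting (p q r : ℕ) (B₁ B₂ : CliffordAlgebra (sigQ p q r))
    (hB₁ : IsGrade (sigQ p q r) 2 B₁) (hB₂ : IsGrade (sigQ p q r) 2 B₂)
    (hcomm : cprod B₁ B₂ = 0) :
    ∀ a : ℕ, Wj (sigQ p q r) (B₁ + B₂) a
      = ∑ j ∈ Finset.range (a + 1),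
          gradeProj (sigQ p q r) (2 * j + 2 * (a - j))
            (Wj (sigQ p q r) B₁ j * Wj (sigQ p q r) B₂ (a - j)) := by
  exact fun a => WjAux.main (sigQ p q r) B₁ B₂ hB₁ hB₂ hcomm a
end

section
/- For a bivector B in ℝ_{p,q,r} with effective dimension 2k, the pair of eigenvalues μ = ±1 belongs to the spectrum σ(B) (i.e. P_{2k}(1) = 0) if and only if co∧(B)² = si∧(B)², which in turn is equivalent to Λ^B Λ^{−B} = 0. -/
namespace PMOne
open CliffordAlgebra

variable {K : Type*} [Field K] {M : Type*} [AddCommGroup M] [Module K M]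

/-- anticommutation of vectors in the exterior algebra -/
lemma ext_anti (u v : M) :
    (ι (0 : QuadraticForm K M) u) * ι (0 : QuadraticForm K M) v
      = - (ι (0 : QuadraticForm K M) v * ι (0 : QuadraticForm K M) u) := by
  have := ι_mul_ι_add_swap (Q := (0 : QuadraticForm K M)) u v
  rw [eq_neg_iff_add_eq_zero, this]
  simp [QuadraticMap.polar]

lemma ext_mul_ι (x : CliffordAlgebra (0 : QuadraticForm K M)) (v : M) :
    x * ι (0 : QuadraticForm K M) v = ι (0 : QuadraticForm K M) v * involute x := by
  induction x using CliffordAlgebra.left_induction with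
  | algebraMap r => simp [Algebra.commutes]
  | add x y hx hy => rw [add_mul, hx, hy, map_add, mul_add]
  | ι_mul x m hx =>
    rw [mul_assoc, hx, ← mul_assoc, ext_anti, map_mul, involute_ι]
    simp [mul_assoc]

lemma involute_contract {Q : QuadraticForm K M} (d : Module.Dual K M) (x : CliffordAlgebra Q) :
    involute (contractLeft d x) = - contractLeft d (involute x) := by
  induction x using CliffordAlgebra.left_induction with
  | algebraMap r => simp
  | add x y hx hy => simp only [map_add, hx, hy]; abel
  | ι_mul x m hx =>
    simp only [contractLeft_ι_mul, map_sub, map_mul, map_smul, involute_ι, hx, neg_mul, map_neg,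
      mul_neg]
    abel

lemma reverse_contract (d : Module.Dual K M) (x : CliffordAlgebra (0 : QuadraticForm K M)) :
    reverse (contractLeft d x) = - contractLeft d (involute (reverse x)) := by
  induction x using CliffordAlgebra.left_induction with
  | algebraMap r => simp [reverse.commutes]
  | add x y hx hy => simp only [map_add, hx, hy]; abel
  | ι_mul x m hx =>
    simp only [contractLeft_ι_mul, map_sub, map_smul, reverse.map_mul, reverse_ι, hx, map_mul,
      involute_ι, mul_neg, map_neg, neg_neg, neg_mul, ext_mul_ι, involute_contract,
      involute_involute]

section form
variable {Q : QuadraticForm K M} {β : LinearMap.BilinForm K M}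
  (h : β.toQuadraticMap = (0 : QuadraticForm K M) - Q)

lemma cf_mul_ι (hs : ∀ u v, β u v = β v u) (x : CliffordAlgebra Q) (v : M) :
    changeForm h (x * ι Q v) = ι (0 : QuadraticForm K M) v * involute (changeForm h x)
      + contractLeft (β v) (involute (changeForm h x)) := by
  induction x using CliffordAlgebra.left_induction with
  | algebraMap r =>
    simp only [← Algebra.smul_def, map_smul, changeForm_ι, changeForm_algebraMap]
    simp [Algebra.smul_def, Algebra.commutes]
  | add x y hx hy => simp only [map_add, hx, hy, add_mul, mul_add]; abel
  | ι_mul x m hx =>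
    rw [mul_assoc, changeForm_ι_mul, hx, changeForm_ι_mul]
    generalize changeForm h x = Y
    simp only [map_add, map_sub, map_mul, involute_ι, involute_contract, contractLeft_ι_mul,
      mul_add, mul_sub, neg_mul, mul_neg, map_neg, ← mul_assoc, ext_anti m v, hs m v]
    rw [contractLeft_comm]
    abel

lemma cf_reverse (hs : ∀ u v, β u v = β v u) (x : CliffordAlgebra Q) :
    changeForm h (reverse x) = reverse (changeForm h x) := by
  induction x using CliffordAlgebra.left_induction with
  | algebraMap r => simp [reverse.commutes]
  | add x y hx hy => simp only [map_add, hx, hy]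
  | ι_mul x m hx =>
    rw [reverse.map_mul, reverse_ι, cf_mul_ι h hs, hx, changeForm_ι_mul, map_sub, reverse.map_mul,
      reverse_ι, reverse_contract, ext_mul_ι]
    abel

end form

/-- induction for bivectors -/
lemma biv_induction {P : (b : ExteriorAlgebra K M) → b ∈ ⋀[K]^2 M → Prop}
    (hι : ∀ (u v : M)
      (huv : ι (0 : QuadraticForm K M) u * ι (0 : QuadraticForm K M) v ∈ ⋀[K]^2 M),
      P (ι (0 : QuadraticForm K M) u * ι (0 : QuadraticForm K M) v) huv)
    (hadd : ∀ (x y) (hx : x ∈ ⋀[K]^2 M) (hy : y ∈ ⋀[K]^2 M), P x hx → P y hy →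
      P (x + y) (Submodule.add_mem _ hx hy))
    {b : ExteriorAlgebra K M} (hb : b ∈ ⋀[K]^2 M) : P b hb := by
  have hb' : b ∈ LinearMap.range (ExteriorAlgebra.ι K (M := M))
    * LinearMap.range (ExteriorAlgebra.ι K (M := M)) := by
    rw [← pow_two]; exact hb
  have key : ∃ hb : b ∈ ⋀[K]^2 M, P b hb := by
    clear hb
    induction hb' using Submodule.mul_induction_on' with
    | mem_mul_mem m hm n hn =>
      have hmn : m * n ∈ ⋀[K]^2 M := by
        unfold ExteriorAlgebra.exteriorPower
        rw [pow_two]; exact Submodule.mul_mem_mul hm hn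
      obtain ⟨u, rfl⟩ := hm
      obtain ⟨v, rfl⟩ := hn
      exact ⟨hmn, hι u v hmn⟩
    | add x hx y hy h1 h2 =>
      obtain ⟨a1, a2⟩ := h1
      obtain ⟨b1, b2⟩ := h2
      exact ⟨_, hadd _ _ _ _ a2 b2⟩
  exact key.2

lemma ι_mul_mem (u : M) {n : ℕ} {x : ExteriorAlgebra K M} (hx : x ∈ ⋀[K]^n M) :
    ι (0 : QuadraticForm K M) u * x ∈ ⋀[K]^(n+1) M := by
  unfold ExteriorAlgebra.exteriorPower
  rw [pow_succ']
  exact Submodule.mul_mem_mul ⟨u, rfl⟩ hx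

lemma contract_zero (d : Module.Dual K M) {x : ExteriorAlgebra K M} (hx : x ∈ ⋀[K]^0 M) :
    contractLeft (Q := (0 : QuadraticForm K M)) d x = 0 := by
  unfold ExteriorAlgebra.exteriorPower at hx
  rw [pow_zero, Submodule.mem_one] at hx
  obtain ⟨r, rfl⟩ := hx
  exact contractLeft_algebraMap _ _ _

lemma contract_mem (d : Module.Dual K M) : ∀ (n : ℕ) {x : ExteriorAlgebra K M},
    x ∈ ⋀[K]^(n+1) M → contractLeft (Q := (0 : QuadraticForm K M)) d x ∈ ⋀[K]^n M := by
  intro n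
  induction n with
  | zero =>
    intro x hx
    unfold ExteriorAlgebra.exteriorPower at hx ⊢
    rw [zero_add, pow_one] at hx
    obtain ⟨u, rfl⟩ := hx
    rw [pow_zero, Submodule.mem_one]
    exact ⟨d u, (contractLeft_ι _ _ _).symm⟩
  | succ n ih =>
    intro x hx
    have hx' := hx
    unfold ExteriorAlgebra.exteriorPower at hx'
    rw [pow_succ'] at hx'
    clear hx
    induction hx' using Submodule.mul_induction_on' with
    | mem_mul_mem m hm y hy =>
      obtain ⟨u, rfl⟩ := hm
      have := contractLeft_ι_mul (Q := (0 : QuadraticForm K M)) d u y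
      erw [this]
      exact Submodule.sub_mem _ (Submodule.smul_mem _ _ hy) (ι_mul_mem u (ih hy))
    | add x hx y hy h1 h2 =>
      rw [map_add]
      exact Submodule.add_mem _ h1 h2

/-- Elements of grade `< n`. -/
def Low (K M : Type*) [Field K] [AddCommGroup M] [Module K M] (n : ℕ) :
    Submodule K (ExteriorAlgebra K M) := ⨆ i : Fin n, ⋀[K]^(i : ℕ) M

lemma mem_low {n i : ℕ} (hi : i < n) {x : ExteriorAlgebra K M} (hx : x ∈ ⋀[K]^i M) :
    x ∈ Low K M n :=
  Submodule.mem_iSup_of_mem (⟨i, hi⟩ : Fin n) hx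

lemma low_map {n m : ℕ} (f : ExteriorAlgebra K M →ₗ[K] ExteriorAlgebra K M)
    (hf : ∀ i < n, ∀ x ∈ ⋀[K]^i M, f x ∈ Low K M m) {x : ExteriorAlgebra K M}
    (hx : x ∈ Low K M n) : f x ∈ Low K M m := by
  have : Low K M n ≤ (Low K M m).comap f := iSup_le fun i y hy => hf i i.2 y hy
  exact this hx

lemma low_contract {n : ℕ} (d : Module.Dual K M) {x : ExteriorAlgebra K M}
    (hx : x ∈ Low K M (n+1)) : contractLeft (Q := (0 : QuadraticForm K M)) d x ∈ Low K M n := by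
  refine low_map (contractLeft (Q := (0 : QuadraticForm K M)) d) ?_ hx
  intro i hi y hy
  cases i with
  | zero => rw [contract_zero d hy]; exact Submodule.zero_mem _
  | succ i => exact mem_low (by omega) (contract_mem d i hy)

lemma low_ι_mul {n : ℕ} (u : M) {x : ExteriorAlgebra K M}
    (hx : x ∈ Low K M n) : ι (0 : QuadraticForm K M) u * x ∈ Low K M (n+1) := by
  refine low_map (LinearMap.mulLeft K (ι (0 : QuadraticForm K M) u)) ?_ hx
  intro i hi y hy
  exact mem_low (Nat.succ_lt_succ hi) (ι_mul_mem u hy)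

lemma low_mono {n m : ℕ} (h : n ≤ m) : Low K M n ≤ Low K M m :=
  iSup_le fun i _ hy => mem_low (i.2.trans_le h) hy

lemma proj_low {n : ℕ} {x : ExteriorAlgebra K M} (hx : x ∈ Low K M n) :
    (DirectSum.decompose (fun n : ℕ => ⋀[K]^n M) x n : ExteriorAlgebra K M) = 0 := by
  have : Low K M n ≤ LinearMap.ker (GradedAlgebra.proj (fun n : ℕ => ⋀[K]^n M) n) := by
    refine iSup_le fun i y hy => ?_
    rw [LinearMap.mem_ker, GradedAlgebra.proj_apply]
    exact DirectSum.decompose_of_mem_ne _ hy (ne_of_lt i.2)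
  exact this hx


section form2
variable {Q : QuadraticForm K M} {β : LinearMap.BilinForm K M}
  (h : β.toQuadraticMap = (0 : QuadraticForm K M) - Q)

lemma cfe_symm_ιι (u v : M) : (changeFormEquiv h).symm
    (ι (0 : QuadraticForm K M) u * ι (0 : QuadraticForm K M) v)
      = ι Q u * ι Q v + algebraMap K _ (β u v) := by
  rw [LinearEquiv.symm_apply_eq, changeFormEquiv_apply, map_add, changeForm_ι_mul_ι,
    changeForm_algebraMap]
  abel

lemma biv_mul_low {b : ExteriorAlgebra K M} (hb : b ∈ ⋀[K]^2 M) (n : ℕ) :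
    ∀ y : CliffordAlgebra Q, changeForm h y ∈ Low K M n →
      changeForm h ((changeFormEquiv h).symm b * y) - b * changeForm h y ∈ Low K M n := by
  induction hb using biv_induction with
  | hι u v _ =>
    intro y hy
    rw [cfe_symm_ιι, add_mul, map_add, mul_assoc, changeForm_ι_mul, changeForm_ι_mul,
      ← Algebra.smul_def, map_smul]
    generalize changeForm h y = Y at hy ⊢
    have e : ι (0 : QuadraticForm K M) u * (ι (0 : QuadraticForm K M) v * Y - contractLeft (β v) Y)
        - contractLeft (β u) (ι (0 : QuadraticForm K M) v * Y - contractLeft (β v) Y)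
        + β u v • Y - ι (0 : QuadraticForm K M) u * ι (0 : QuadraticForm K M) v * Y
        = - (ι (0 : QuadraticForm K M) u * contractLeft (β v) Y)
          + ι (0 : QuadraticForm K M) v * contractLeft (β u) Y
          + contractLeft (β u) (contractLeft (β v) Y) := by
      rw [map_sub, contractLeft_ι_mul, mul_sub, mul_assoc]
      abel
    rw [e]
    cases n with
    | zero =>
      have : Y = 0 := by
        have h0 : Low K M 0 = ⊥ := iSup_of_empty _
        rw [h0] at hy
        exact (Submodule.mem_bot K).mp hy
      subst this
      simp
    | succ n =>
      refine Submodule.add_mem _ (Submodule.add_mem _ (Submodule.neg_mem _ ?_) ?_) ?_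
      · exact low_ι_mul u (low_contract _ hy)
      · exact low_ι_mul v (low_contract _ hy)
      · exact low_contract _ (low_mono (Nat.le_succ _) (low_contract _ hy)|> low_mono (Nat.le_succ _))
  | hadd x y _ _ hx hy =>
    intro z hz
    have := Submodule.add_mem _ (hx z hz) (hy z hz)
    rw [map_add, add_mul, map_add, add_mul]
    convert this using 1
    abel

lemma biv_low {b : ExteriorAlgebra K M} (hb : b ∈ ⋀[K]^2 M) {n : ℕ} {x : ExteriorAlgebra K M}
    (hx : x ∈ Low K M n) : b * x ∈ Low K M (n + 2) := by
  refine low_map (LinearMap.mulLeft K b) ?_ hx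
  intro i hi y hy
  have : b * y ∈ ⋀[K]^(2 + i) M := SetLike.mul_mem_graded hb hy
  exact mem_low (by omega) this

lemma biv_pow {b : ExteriorAlgebra K M} (hb : b ∈ ⋀[K]^2 M) (j : ℕ) : b ^ j ∈ ⋀[K]^(2 * j) M := by
  have := SetLike.pow_mem_graded (A := fun n : ℕ => ⋀[K]^n M) j hb
  simpa [mul_comm] using this

lemma cf_pow_low {b : ExteriorAlgebra K M} (hb : b ∈ ⋀[K]^2 M) (j : ℕ) :
    changeForm h ((changeFormEquiv h).symm b ^ j) - b ^ j ∈ Low K M (2 * j) := by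
  induction j with
  | zero => simp
  | succ j ih =>
    have h1 : changeForm h ((changeFormEquiv h).symm b ^ j) ∈ Low K M (2 * j + 1) := by
      have := Submodule.add_mem _ (low_mono (Nat.le_succ _) ih)
        (mem_low (Nat.lt_succ_self _) (biv_pow hb j))
      simpa using this
    have h2 := low_mono (Nat.le_succ _) (biv_mul_low h hb _ _ h1)
    have h3 := biv_low hb ih
    have h4 := Submodule.add_mem _ h2 h3
    rw [pow_succ', pow_succ' b]
    have e : changeForm h ((changeFormEquiv h).symm b * (changeFormEquiv h).symm b ^ j) - b * b ^ j
        = changeForm h ((changeFormEquiv h).symm b * (changeFormEquiv h).symm b ^ j)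
          - b * changeForm h ((changeFormEquiv h).symm b ^ j)
          + b * (changeForm h ((changeFormEquiv h).symm b ^ j) - b ^ j) := by
      rw [mul_sub]; abel
    rw [e]
    exact h4

lemma proj_cf_pow {b : ExteriorAlgebra K M} (hb : b ∈ ⋀[K]^2 M) (j : ℕ) :
    (DirectSum.decompose (fun n : ℕ => ⋀[K]^n M)
      (changeForm h ((changeFormEquiv h).symm b ^ j)) (2 * j) : ExteriorAlgebra K M) = b ^ j := by
  have h1 := proj_low (cf_pow_low h hb j)
  rw [DirectSum.decompose_sub, DirectSum.sub_apply, AddSubgroupClass.coe_sub,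
    DirectSum.decompose_of_mem_same (fun n : ℕ => ⋀[K]^n M) (biv_pow hb j)] at h1
  exact sub_eq_zero.mp h1

end form2

lemma biv_involute {b : ExteriorAlgebra K M} (hb : b ∈ ⋀[K]^2 M) :
    involute (Q := (0 : QuadraticForm K M)) b = b := by
  induction hb using biv_induction with
  | hι u v _ => simp
  | hadd x y _ _ hx hy => rw [map_add, hx, hy]

lemma biv_reverse {b : ExteriorAlgebra K M} (hb : b ∈ ⋀[K]^2 M) :
    reverse (Q := (0 : QuadraticForm K M)) b = - b := by
  induction hb using biv_induction with
  | hι u v _ => rw [reverse.map_mul, reverse_ι, reverse_ι, ext_anti]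
  | hadd x y _ _ hx hy => rw [map_add, hx, hy]; abel

lemma biv_pow_involute {b : ExteriorAlgebra K M} (hb : b ∈ ⋀[K]^2 M) (j : ℕ) :
    involute (Q := (0 : QuadraticForm K M)) (b ^ j) = b ^ j := by
  rw [map_pow, biv_involute hb]

lemma biv_pow_reverse {b : ExteriorAlgebra K M} (hb : b ∈ ⋀[K]^2 M) (j : ℕ) :
    reverse (Q := (0 : QuadraticForm K M)) (b ^ j) = (-1 : K) ^ j • b ^ j := by
  induction j with
  | zero => simp
  | succ j ih =>
    rw [pow_succ, reverse.map_mul, ih, biv_reverse hb, mul_smul_comm, neg_mul, ← pow_succ',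
      ← pow_succ, pow_succ (-1 : K)]
    simp

lemma biv_contract_mul {b : ExteriorAlgebra K M} (hb : b ∈ ⋀[K]^2 M) (d : Module.Dual K M)
    (x : ExteriorAlgebra K M) :
    contractLeft (Q := (0 : QuadraticForm K M)) d (b * x)
      = contractLeft (Q := (0 : QuadraticForm K M)) d b * x
        + b * contractLeft (Q := (0 : QuadraticForm K M)) d x := by
  induction hb using biv_induction with
  | hι u v _ =>
    rw [mul_assoc, contractLeft_ι_mul, contractLeft_ι_mul, contractLeft_ι_mul, contractLeft_ι]
    rw [mul_sub, sub_mul, mul_smul_comm, smul_mul_assoc, mul_assoc, mul_assoc,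
      ← Algebra.smul_def, mul_smul_comm]
    abel
  | hadd y z _ _ hy hz => rw [add_mul, map_add, hy, hz, map_add, add_mul, add_mul]; abel

lemma biv_contract_ι {b : ExteriorAlgebra K M} (hb : b ∈ ⋀[K]^2 M) (d : Module.Dual K M) :
    ∃ w : M, contractLeft (Q := (0 : QuadraticForm K M)) d b = ι (0 : QuadraticForm K M) w := by
  have := contract_mem d 1 hb
  unfold ExteriorAlgebra.exteriorPower at this
  rw [pow_one] at this
  obtain ⟨w, hw⟩ := this
  exact ⟨w, hw.symm⟩

lemma biv_contract_pow {b : ExteriorAlgebra K M} (hb : b ∈ ⋀[K]^2 M) (d : Module.Dual K M)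
    (w : M) (hw : contractLeft (Q := (0 : QuadraticForm K M)) d b = ι (0 : QuadraticForm K M) w)
    (j : ℕ) :
    contractLeft (Q := (0 : QuadraticForm K M)) d (b ^ (j + 1))
      = ((j : K) + 1) • (ι (0 : QuadraticForm K M) w * b ^ j) := by
  induction j with
  | zero => simp [hw]
  | succ j ih =>
    have hc : b * ι (0 : QuadraticForm K M) w = ι (0 : QuadraticForm K M) w * b := by
      rw [ext_mul_ι, biv_involute hb]
    rw [pow_succ', biv_contract_mul hb, ih, hw, mul_smul_comm, ← mul_assoc, hc, mul_assoc,
      ← pow_succ']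
    push_cast
    module

section W
variable {Q : QuadraticForm K M} {β : LinearMap.BilinForm K M}
  (h : β.toQuadraticMap = (0 : QuadraticForm K M) - Q)

/-- key relation -/
lemma key_rel [CharZero K] (hs : ∀ u v, β u v = β v u) {b : ExteriorAlgebra K M}
    (hb : b ∈ ⋀[K]^2 M)
    (W : ℕ → CliffordAlgebra Q)
    (hW : ∀ j, changeForm h (W j) = (j.factorial : K)⁻¹ • b ^ j) (v : M) :
    ∃ w : M, ∀ j, ι Q v * W (j + 1) - W (j + 1) * ι Q v = ι Q w * W j + W j * ι Q w := by
  obtain ⟨w, hw⟩ := biv_contract_ι hb (β v)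
  refine ⟨-w, fun j => (changeFormEquiv h).injective ?_⟩
  rw [map_neg (ι Q), neg_mul, mul_neg]
  simp only [changeFormEquiv_apply, map_sub, map_add, changeForm_ι_mul, cf_mul_ι h hs, hW,
    map_smul, biv_pow_involute hb, biv_contract_pow hb (β v) w hw, map_neg]
  have e : ((j+1).factorial : K)⁻¹ * ((j : K) + 1) = (j.factorial : K)⁻¹ := by
    rw [Nat.factorial_succ]; push_cast
    have : (j : K) + 1 ≠ 0 := by exact_mod_cast Nat.succ_ne_zero j
    have h2 : (j.factorial : K) ≠ 0 := by exact_mod_cast Nat.factorial_ne_zero j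
    field_simp
  simp only [smul_smul, e, mul_smul_comm]
  module

end W

section PS
open PowerSeries
variable {Q : QuadraticForm K M}

lemma central_of_ι (c : CliffordAlgebra Q) (hc : ∀ v, Commute (ι Q v) c) (x : CliffordAlgebra Q) :
    Commute x c := by
  induction x using CliffordAlgebra.left_induction with
  | algebraMap r => exact Algebra.commutes r c
  | add x y hx hy => exact hx.add_left hy
  | ι_mul x m hx => exact (hc m).mul_left hx

lemma ps_comm (W : ℕ → CliffordAlgebra Q) (hW0 : W 0 = 1)
    (hW : ∀ v : M, ∃ w : M, ∀ j,
      ι Q v * W (j + 1) - W (j + 1) * ι Q v = ι Q w * W j + W j * ι Q w) :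
    (PowerSeries.mk W) * (PowerSeries.mk fun j => (-1) ^ j * W j)
      = (PowerSeries.mk fun j => (-1) ^ j * W j) * (PowerSeries.mk W) := by
  set a := PowerSeries.mk W with ha
  set b := PowerSeries.mk (fun j => (-1) ^ j * W j) with hb
  choose A hA using hW
  have r1 : ∀ v, (C (ι Q v) - X * C (ι Q (A v))) * a = a * (C (ι Q v) + X * C (ι Q (A v))) := by
    intro v
    ext n
    rw [sub_mul, mul_add, mul_assoc, ← mul_assoc a, ← PowerSeries.X_mul (φ := a), mul_assoc,
      map_sub, map_add]
    cases n with
    | zero => simp [ha, hW0]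
    | succ n =>
      simp only [coeff_succ_X_mul, coeff_C_mul, coeff_mul_C, ha, coeff_mk]
      have := hA v n
      rw [sub_eq_iff_eq_add] at this
      rw [this]; abel
  have r2 : ∀ v, (C (ι Q v) + X * C (ι Q (A v))) * b = b * (C (ι Q v) - X * C (ι Q (A v))) := by
    intro v
    ext n
    rw [add_mul, mul_sub, mul_assoc, ← mul_assoc b, ← PowerSeries.X_mul (φ := b), mul_assoc,
      map_sub, map_add]
    cases n with
    | zero => simp [hb, hW0]
    | succ n =>
      simp only [coeff_succ_X_mul, coeff_C_mul, coeff_mul_C, hb, coeff_mk]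
      have := hA v n
      rw [sub_eq_iff_eq_add] at this
      rcases Nat.even_or_odd n with hn | hn
      · rw [hn.neg_one_pow, hn.add_one.neg_one_pow]
        simp only [neg_mul, one_mul, mul_neg, this]
        abel
      · rw [hn.neg_one_pow, hn.add_one.neg_one_pow]
        simp only [neg_mul, one_mul, mul_neg, this]
        abel
  have r3 : ∀ v, (C (ι Q v) - X * C (ι Q (A v))) * (a * b)
      = (a * b) * (C (ι Q v) - X * C (ι Q (A v))) := by
    intro v
    rw [← mul_assoc, r1, mul_assoc, r2, mul_assoc]
  have r4 : ∀ n, ∀ v, Commute (ι Q v) (coeff n (a * b)) := by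
    intro n
    induction n with
    | zero => intro v; simp [ha, hb, hW0]
    | succ n ih =>
      intro v
      have := congrArg (coeff (n + 1)) (r3 v)
      rw [sub_mul, mul_sub, mul_assoc, ← mul_assoc (a * b), ← PowerSeries.X_mul (φ := a * b),
        mul_assoc X, map_sub, map_sub, coeff_succ_X_mul, coeff_succ_X_mul, coeff_C_mul,
        coeff_C_mul, coeff_mul_C, coeff_mul_C, (ih (A v)).eq] at this
      exact sub_left_injective this
  have r5 : b * (a * b) = (a * b) * b := by
    ext n
    rw [coeff_mul, coeff_mul, ← Finset.Nat.sum_antidiagonal_swap]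
    refine Finset.sum_congr rfl fun p _ => ?_
    exact (central_of_ι _ (r4 _) _).eq
  have r6 : b * PowerSeries.invOfUnit b 1 = 1 := by
    apply PowerSeries.mul_invOfUnit
    simp [hb, hW0]
  calc a * b = (a * b) * b * PowerSeries.invOfUnit b 1 := by rw [mul_assoc, r6, mul_one]
    _ = b * a * (b * PowerSeries.invOfUnit b 1) := by rw [← r5]; simp only [mul_assoc]
    _ = b * a := by rw [r6, mul_one]

lemma sum_comm_of_ps (W V : ℕ → CliffordAlgebra Q) (N : ℕ) (hW : ∀ j, N < j → W j = 0)
    (hV : ∀ j, N < j → V j = 0)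
    (hc : PowerSeries.mk W * PowerSeries.mk V = PowerSeries.mk V * PowerSeries.mk W) :
    (∑ j ∈ Finset.range (N + 1), W j) * (∑ j ∈ Finset.range (N + 1), V j)
      = (∑ j ∈ Finset.range (N + 1), V j) * (∑ j ∈ Finset.range (N + 1), W j) := by
  let P : (ℕ → CliffordAlgebra Q) → Polynomial (CliffordAlgebra Q) := fun W =>
    ∑ j ∈ Finset.range (N + 1), Polynomial.monomial j (W j)
  have hP : ∀ W : ℕ → CliffordAlgebra Q, (∀ j, N < j → W j = 0) →
      ((P W : Polynomial _) : PowerSeries (CliffordAlgebra Q)) = PowerSeries.mk W := by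
    intro W hW
    ext n
    simp only [P, Polynomial.coeff_coe, Polynomial.finsetSum_coeff, Polynomial.coeff_monomial,
      coeff_mk, Finset.sum_ite_eq', Finset.mem_range]
    split_ifs with hn
    · rfl
    · exact (hW n (by omega)).symm
  have hE : ∀ W : ℕ → CliffordAlgebra Q, (P W).eval 1 = ∑ j ∈ Finset.range (N + 1), W j := by
    intro W
    simp [P, Polynomial.eval_finsetSum]
  have hM : ∀ p q : Polynomial (CliffordAlgebra Q), (p * q).eval 1 = p.eval 1 * q.eval 1 := by
    intro p q
    exact Polynomial.eval₂_mul_noncomm _ _ fun k => Commute.one_right _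
  rw [← hP W hW, ← hP V hV, ← Polynomial.coe_mul, ← Polynomial.coe_mul, Polynomial.coe_inj] at hc
  have := congrArg (Polynomial.eval 1) hc
  rwa [hM, hM, hE, hE] at this

end PS

section final
variable [CharZero K]

/-- the bilinear form used by `equivExterior` -/
lemma exists_form (Q : QuadraticForm K M) (B : CliffordAlgebra Q) (hB : IsGrade Q 2 B) :
    ∃ (β : LinearMap.BilinForm K M) (h : β.toQuadraticMap = (0 : QuadraticForm K M) - Q)
      (b : ExteriorAlgebra K M), (∀ u v, β u v = β v u) ∧ b ∈ ⋀[K]^2 M ∧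
      (∀ j, changeForm h (Wj Q B j) = (j.factorial : K)⁻¹ • b ^ j) ∧
      (∀ j, changeForm h (Wj Q (-B) j) = (j.factorial : K)⁻¹ • (-b) ^ j) := by
  letI : Invertible (2 : K) := invertibleOfNonzero two_ne_zero
  have hb : equivExterior Q B ∈ ⋀[K]^2 M := by
    have h1 : (DirectSum.decompose (fun n : ℕ => ⋀[K]^n M) (equivExterior Q B) 2 :
        ExteriorAlgebra K M) = equivExterior Q B := by
      have := congrArg (equivExterior Q) hB
      unfold gradeProj at this
      rwa [LinearEquiv.apply_symm_apply] at this
    rw [← h1]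
    exact SetLike.coe_mem _
  have key : ∀ b : ExteriorAlgebra K M, b ∈ ⋀[K]^2 M → ∀ j,
      equivExterior Q (Wj Q ((equivExterior Q).symm b) j) = (j.factorial : K)⁻¹ • b ^ j := by
    intro b hb j
    unfold Wj gradeProj
    rw [map_smul, LinearEquiv.apply_symm_apply]
    congr 1
    exact proj_cf_pow (changeForm.associated_neg_proof (Q := Q)) hb j
  refine ⟨_, changeForm.associated_neg_proof, equivExterior Q B, ?_, hb, ?_, ?_⟩
  · intro u v
    exact QuadraticMap.associated_isSymm K (-Q) u v
  · intro j
    have := key _ hb j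
    rw [LinearEquiv.symm_apply_apply] at this
    exact this
  · intro j
    have := key _ (Submodule.neg_mem _ hb) j
    rw [map_neg, LinearEquiv.symm_apply_apply] at this
    exact this

lemma Wj_facts (Q : QuadraticForm K M) (B : CliffordAlgebra Q) (hB : IsGrade Q 2 B) :
    Wj Q B 0 = 1 ∧ (∀ j, Wj Q (-B) j = (-1) ^ j * Wj Q B j) ∧
    (∀ j, reverse (Wj Q B j) = (-1) ^ j * Wj Q B j) ∧
    (∀ v : M, ∃ w : M, ∀ j, ι Q v * Wj Q B (j + 1) - Wj Q B (j + 1) * ι Q v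
      = ι Q w * Wj Q B j + Wj Q B j * ι Q w) ∧
    (Module.Finite K M → ∀ j, Module.finrank K M < j → Wj Q B j = 0) := by
  obtain ⟨β, h, b, hs, hb, hW, hW'⟩ := exists_form Q B hB
  have inj := (changeFormEquiv h).injective
  have hsm : ∀ (j : ℕ) (x : CliffordAlgebra Q), (-1) ^ j * x = ((-1 : K) ^ j) • x := by
    intro j x
    rw [Algebra.smul_def, map_pow, map_neg, map_one]
  refine ⟨inj ?_, fun j => inj ?_, fun j => inj ?_, key_rel h hs hb _ hW, fun hfin j hj => inj ?_⟩
  · rw [changeFormEquiv_apply, changeFormEquiv_apply, hW]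
    simp
  · rw [hsm, changeFormEquiv_apply, changeFormEquiv_apply, hW', map_smul, hW, smul_comm]
    congr 1
    rw [← neg_one_smul K b, smul_pow]
  · rw [hsm, changeFormEquiv_apply, changeFormEquiv_apply, cf_reverse h hs, hW, map_smul,
      map_smul, hW, biv_pow_reverse hb, smul_comm]
  · rw [changeFormEquiv_apply, changeFormEquiv_apply, hW, map_zero]
    have h0 : Module.finrank K (⋀[K]^(2 * j) M) = 0 := by
      rw [exteriorPower.finrank_eq]
      exact Nat.choose_eq_zero_of_lt (by omega)
    have : b ^ j = 0 := by
      have h1 := Module.finrank_zero_iff.mp h0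
      have := Subsingleton.elim (⟨b ^ j, biv_pow hb j⟩ : ⋀[K]^(2 * j) M) 0
      exact congrArg Subtype.val this
    rw [this, smul_zero]

end final

end PMOne

open CliffordAlgebra in
/-- for a bivector `B` of effective dimension `2k`, the eigenvalues `μ = ±1`
belong to the spectrum of `B` (i.e. `P_{2k}(1) = M₁ M̃₁ = 0`) iff `co∧(B)² = si∧(B)²`,
which in turn is equivalent to `Λ^B Λ^{-B} = 0`. -/
theorem pm_one_in_spectrum_iff (p q r : ℕ) (B : CliffordAlgebra (sigQ p q r))
    (hB : IsGrade (sigQ p q r) 2 B) (k : ℕ) (hk : HasEffDim (sigQ p q r) B k) :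
    ((Mpoly (sigQ p q r) B k 1 * reverse (Mpoly (sigQ p q r) B k 1) = 0) ↔
      coW (sigQ p q r) (p + q + r) B ^ 2 = siW (sigQ p q r) (p + q + r) B ^ 2) ∧
    ((coW (sigQ p q r) (p + q + r) B ^ 2 = siW (sigQ p q r) (p + q + r) B ^ 2) ↔
      outerExp (sigQ p q r) (p + q + r) B * outerExp (sigQ p q r) (p + q + r) (-B) = 0) := by
  obtain ⟨h0, hneg, hrev, hrel, hvan⟩ := PMOne.Wj_facts _ B hB
  have hvan' : ∀ j, p + q + r < j → Wj (sigQ p q r) B j = 0 := by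
    intro j hj
    exact hvan inferInstance j (by simpa using hj)
  have hcomm : outerExp (sigQ p q r) (p + q + r) B * outerExp (sigQ p q r) (p + q + r) (-B)
      = outerExp (sigQ p q r) (p + q + r) (-B) * outerExp (sigQ p q r) (p + q + r) B := by
    unfold outerExp
    simp only [hneg]
    refine PMOne.sum_comm_of_ps _ (fun j => (-1) ^ j * Wj (sigQ p q r) B j) (p + q + r) hvan' ?_
      (PMOne.ps_comm _ h0 hrel)
    intro j hj
    simp [hvan' j hj]
  have hkN : k ≤ p + q + r := by
    by_contra hlt
    exact hk.1 (hvan' k (by omega))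
  have hext : ∀ f : ℕ → CliffordAlgebra (sigQ p q r),
      ∑ j ∈ Finset.range (k + 1), f j * Wj (sigQ p q r) B j
        = ∑ j ∈ Finset.range (p + q + r + 1), f j * Wj (sigQ p q r) B j := by
    intro f
    refine Finset.sum_subset (Finset.range_mono (by omega)) fun j _ hj => ?_
    rw [hk.2 j (by simpa using hj), mul_zero]
  have hM : Mpoly (sigQ p q r) B k 1
      = (-1 : ℝ) ^ k • outerExp (sigQ p q r) (p + q + r) (-B) := by
    unfold outerExp Mpoly
    simp only [hneg]
    rw [← hext, Finset.smul_sum]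
    refine Finset.sum_congr rfl fun j hj => ?_
    have hj' : j ≤ k := by simpa [Nat.lt_succ_iff] using hj
    obtain ⟨i, rfl⟩ := Nat.exists_eq_add_of_le hj'
    have e : ((-1) ^ j : CliffordAlgebra (sigQ p q r)) * Wj (sigQ p q r) B j
        = ((-1 : ℝ) ^ j) • Wj (sigQ p q r) B j := by
      rw [Algebra.smul_def, map_pow, map_neg, map_one]
    rw [e, smul_smul, Nat.add_sub_cancel_left, pow_add, mul_comm ((-1 : ℝ) ^ j), mul_assoc,
      ← mul_pow]
    simp
  have hR : reverse (outerExp (sigQ p q r) (p + q + r) (-B))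
      = outerExp (sigQ p q r) (p + q + r) B := by
    unfold outerExp
    simp only [hneg]
    rw [map_sum]
    refine Finset.sum_congr rfl fun j _ => ?_
    rcases Nat.even_or_odd j with hj | hj
    · simp [hj.neg_one_pow, hrev]
    · simp [hj.neg_one_pow, hrev]
  have h1 : Mpoly (sigQ p q r) B k 1 * reverse (Mpoly (sigQ p q r) B k 1)
      = outerExp (sigQ p q r) (p + q + r) B * outerExp (sigQ p q r) (p + q + r) (-B) := by
    rw [hM, map_smul, hR, smul_mul_smul_comm, ← mul_pow, hcomm]
    simp
  have h2 : coW (sigQ p q r) (p + q + r) B ^ 2 - siW (sigQ p q r) (p + q + r) B ^ 2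
      = outerExp (sigQ p q r) (p + q + r) B * outerExp (sigQ p q r) (p + q + r) (-B) := by
    unfold coW siW
    generalize outerExp (sigQ p q r) (p + q + r) B = a at *
    generalize outerExp (sigQ p q r) (p + q + r) (-B) = b at *
    rw [pow_two, pow_two, smul_mul_smul_comm, smul_mul_smul_comm, mul_add, add_mul, add_mul,
      mul_sub, sub_mul, sub_mul, ← hcomm]
    module
  have h3 : coW (sigQ p q r) (p + q + r) B ^ 2 = siW (sigQ p q r) (p + q + r) B ^ 2 ↔
      outerExp (sigQ p q r) (p + q + r) B * outerExp (sigQ p q r) (p + q + r) (-B) = 0 := by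
    rw [← h2, sub_eq_zero]
  exact ⟨by rw [h1, h3], h3⟩
end
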